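/- Let $G$ be a finite group of order $2^n$ with $n \ge 3$. Every irreducible complex character $\chi$ of $G$ that is non-linear (that is, $\chi(1) > 1$) satisfies $\chi(g) = 0$ for at least $2^{n-1}+2$ elements $g \in G$. Furthermore, there exists a non-linear irreducible complex character $\chi$ of $G$ that vanishes at exactly $2^{n-1}+2$ elements of $G$ if and only if one of the following holds: - $G$ is isomorphic to the dihedral group $\langle a, b \mid a^{2^{n-1}} = b^2 = 1,\ bab^{-1} = a^{-1}\rangle$ of order $2^n$; - $G$ is isomorphic to the generalized quaternion group $\langle a, b \mid a^{2^{n-1}} = 1,\ b^2 = a^{2^{n-2}},\ bab^{-1} = a^{-1}\rangle$ of order $2^n$; - $n \ge 4$ and $G$ is isomorphic to the semidihedral group $\langle a, b \mid a^{2^{n-1}} = b^2 = 1,\ bab^{-1} = a^{2^{n-2}-1}\rangle$ of order $2^n$. -/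

import Mathlib

open CategoryTheory

/-- The relators of the semidihedral group of order `2^n` (`n ≥ 4`):
`a^(2^(n-1)) = b^2 = 1`, `b * a * b⁻¹ = a^(2^(n-2) - 1)`, where `a = of 0` and `b = of 1`. -/
def semidihedralRels (n : ℕ) : Set (FreeGroup (Fin 2)) :=
  {(FreeGroup.of 0) ^ (2 ^ (n - 1)),
   (FreeGroup.of 1) ^ 2,
   FreeGroup.of 1 * FreeGroup.of 0 * (FreeGroup.of 1)⁻¹ * ((FreeGroup.of 0) ^ (2 ^ (n - 2) - 1))⁻¹}

/-- The presented group `⟨a, b ∣ a^(2^(n-1)) = b^2 = 1, b a b⁻¹ = a^(2^(n-2) - 1)⟩`.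
It is the semidihedral group of order `2^n` when `n ≥ 4`; smaller `n` are meaningless
(for `n = 3` the presentation gives the abelian group `C₄ × C₂`). -/
def SemidihedralGroup (n : ℕ) : Type := PresentedGroup (semidihedralRels n)

instance SemidihedralGroup.instGroup (n : ℕ) : Group (SemidihedralGroup n) :=
  inferInstanceAs (Group (PresentedGroup (semidihedralRels n)))

/-!
Let `ρ` be an irreducible representation of a `2`-group `G` of dimension greater than `1`, with
character `χ`, and let `Z` be the subgroup of elements acting as scalars. Choose `a ∉ Z` whose image
in `G ⧸ Z` is a central involution. Every `g` commutes or anticommutes with `a` under `ρ`, and `χ`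
vanishes at each `g` of the second kind. Those of the first kind form a subgroup `C` of index `2`,
and `χ` also vanishes on the coset `a Z ⊆ C`. This gives at least `2 ^ (n - 1) + |Z|` zeros, where
`|Z| ≥ 2`.

If `dim ρ = 2` there are no further zeros. If `dim ρ > 2`, the restriction of `ρ` to `C` is the sum
of the two eigenspaces of `ρ a`. Both are irreducible of dimension greater than `1`, so by the same
argument their characters vanish off proper subgroups of `C` that contain `a Z`. Two proper
subgroups do not cover `C`, so there is a further zero.

Hence `2 ^ (n - 1) + 2` zeros occur exactly when `dim ρ = 2` and `|Z| = 2`. Then `ρ` is faithful,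
`C` is abelian and the center of `G` has order `2`. Conversely, if the center has order `2` and `G`
has an abelian subgroup of index `2`, then an irreducible representation that is nontrivial on the
center is faithful of dimension `2`. The groups with these two properties have a cyclic subgroup of
index `2`, and this makes them dihedral, quaternion or semidihedral.
-/

section Metacyclic

variable {G K : Type*} [Group G] [Group K] {m : ℕ} {r s : ℤ} {x y : G} {x' y' : K}

/-- `x` and `y` generate `G` and satisfy the relations `x ^ m = 1`, `y * y = x ^ s` and
`y * x * y⁻¹ = x ^ r`. Dihedral, generalized quaternion and semidihedral groups arise from
particular values of `m`, `r` and `s`. No relation between `m` and the order of `G` is imposed,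
so that the notion is meaningful for groups given by a presentation. -/
structure IsMetacyclicPair (m : ℕ) (r s : ℤ) (x y : G) : Prop where
  closure_eq_top : Subgroup.closure {x, y} = ⊤
  pow_eq_one : x ^ m = 1
  mul_self_eq : y * y = x ^ s
  conj_eq : y * x * y⁻¹ = x ^ r

namespace IsMetacyclicPair

theorem map (h : IsMetacyclicPair m r s x y) {f : G →* K} (hf : Function.Surjective f) :
    IsMetacyclicPair m r s (f x) (f y) where
  closure_eq_top := by
    rw [← Set.image_pair, ← f.map_closure, h.closure_eq_top, Subgroup.map_top_of_surjective f hf]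
  pow_eq_one := by rw [← map_pow, h.pow_eq_one, map_one]
  mul_self_eq := by rw [← map_mul, h.mul_self_eq, map_zpow]
  conj_eq := by rw [← map_inv, ← map_mul, ← map_mul, h.conj_eq, map_zpow]

theorem inv_conj_eq (h : IsMetacyclicPair m r s x y) : y⁻¹ * x * y = x ^ r :=
  calc y⁻¹ * x * y = (y * y)⁻¹ * (y * x * y⁻¹) * (y * y) := by group
    _ = x ^ r := by rw [h.mul_self_eq, h.conj_eq]; group

theorem index_zpowers_dvd_two (h : IsMetacyclicPair m r s x y) :
    (Subgroup.zpowers x).index ∣ 2 := by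
  refine Subgroup.index_dvd_two_iff'.2 ⟨y⁻¹, fun g ↦ ?_⟩
  have mul_self_mem : y * y ∈ Subgroup.zpowers x := ⟨s, h.mul_self_eq.symm⟩
  have conj_mem {u : G} (hu : u ∈ Subgroup.zpowers x) : y⁻¹ * u * y ∈ Subgroup.zpowers x := by
    obtain ⟨i, rfl⟩ := hu
    refine ⟨r * i, ?_⟩
    simpa [zpow_mul, h.inv_conj_eq] using conj_zpow (a := y⁻¹) (b := x) (i := i)
  have x_mul {u g : G} (hu : u ∈ Subgroup.zpowers x)
      (hg : y⁻¹ * g ∈ Subgroup.zpowers x ∨ g ∈ Subgroup.zpowers x) :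
      y⁻¹ * (u * g) ∈ Subgroup.zpowers x ∨ u * g ∈ Subgroup.zpowers x :=
    hg.imp (fun hg ↦ by simpa [mul_assoc] using mul_mem (conj_mem hu) hg) (mul_mem hu)
  have hg : g ∈ Subgroup.closure {x, y} := h.closure_eq_top ▸ Subgroup.mem_top g
  induction hg using Subgroup.closure_induction_left with
  | one => exact Or.inr (one_mem _)
  | mul_left u hu g _ ih =>
    rcases hu with rfl | rfl
    · exact x_mul (Subgroup.mem_zpowers _) ih
    · refine ih.symm.imp (fun hg ↦ by simpa using hg) fun hg ↦ ?_
      simpa [mul_assoc] using mul_mem mul_self_mem hg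
  | inv_mul_cancel u hu g _ ih =>
    rcases hu with rfl | rfl
    · exact x_mul (inv_mem (Subgroup.mem_zpowers _)) ih
    · refine ih.symm.imp (fun hg ↦ ?_) id
      simpa [mul_assoc] using mul_mem (inv_mem mul_self_mem) hg

theorem finite (h : IsMetacyclicPair m r s x y) (hm : m ≠ 0) : Finite G := by
  refine Nat.finite_of_card_ne_zero ?_
  rw [← (Subgroup.zpowers x).card_mul_index, Nat.card_zpowers]
  exact mul_ne_zero (ne_zero_of_dvd_ne_zero hm (orderOf_dvd_of_pow_eq_one h.pow_eq_one))
    (ne_zero_of_dvd_ne_zero two_ne_zero h.index_zpowers_dvd_two)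

theorem card_dvd (h : IsMetacyclicPair m r s x y) : Nat.card G ∣ m * 2 := by
  rw [← (Subgroup.zpowers x).card_mul_index, Nat.card_zpowers]
  exact mul_dvd_mul (orderOf_dvd_of_pow_eq_one h.pow_eq_one) h.index_zpowers_dvd_two

theorem orderOf_eq (h : IsMetacyclicPair m r s x y) (hG : Nat.card G = m * 2) :
    orderOf x = m := by
  refine Nat.dvd_antisymm (orderOf_dvd_of_pow_eq_one h.pow_eq_one)
    (Nat.dvd_of_mul_dvd_mul_right two_pos ?_)
  rw [← hG, ← (Subgroup.zpowers x).card_mul_index, Nat.card_zpowers]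
  exact mul_dvd_mul_left _ h.index_zpowers_dvd_two

theorem index_zpowers (h : IsMetacyclicPair m r s x y) (hm : m ≠ 0) (hG : Nat.card G = m * 2) :
    (Subgroup.zpowers x).index = 2 := by
  have hcard := (Subgroup.zpowers x).card_mul_index
  rw [Nat.card_zpowers, h.orderOf_eq hG, hG] at hcard
  exact Nat.eq_of_mul_eq_mul_left (Nat.pos_of_ne_zero hm) hcard

theorem bijective_of_surjective (h : IsMetacyclicPair m r s x y) (hm : m ≠ 0)
    (hK : Nat.card K = m * 2) {f : G →* K} (hf : Function.Surjective f) :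
    Function.Bijective f := by
  have := h.finite hm
  refine (Nat.bijective_iff_surjective_and_card f).2 ⟨hf, le_antisymm ?_
    (Nat.card_le_card_of_surjective f hf)⟩
  rw [hK]
  exact Nat.le_of_dvd (by positivity) h.card_dvd

theorem surjective_of_mem_range (h : IsMetacyclicPair m r s x y) {f : K →* G}
    (hx : x ∈ f.range) (hy : y ∈ f.range) : Function.Surjective f := by
  rw [← MonoidHom.range_eq_top, ← top_le_iff, ← h.closure_eq_top, Subgroup.closure_le]
  rintro _ (rfl | rfl) <;> assumption

-- The isomorphism is the subgroup of `G × K` generated by `(x, x')` and `(y, y')`: being generated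
-- by a metacyclic pair, it is too small for its two projections not to be bijective.
theorem nonempty_mulEquiv (h : IsMetacyclicPair m r s x y) (h' : IsMetacyclicPair m r s x' y')
    (hm : m ≠ 0) (hG : Nat.card G = m * 2) (hK : Nat.card K = m * 2) : Nonempty (G ≃* K) := by
  let graph : Subgroup (G × K) := Subgroup.closure {(x, x'), (y, y')}
  let u : graph := ⟨(x, x'), Subgroup.subset_closure (Or.inl rfl)⟩
  let v : graph := ⟨(y, y'), Subgroup.subset_closure (Or.inr rfl)⟩
  have huv : IsMetacyclicPair m r s u v :=
    { closure_eq_top := by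
        rw [← Subgroup.closure_closure_coe_preimage (k := {(x, x'), (y, y')})]
        congr 1
        ext g
        simp [u, v, Subtype.ext_iff]
      pow_eq_one := Subtype.ext (Prod.ext h.pow_eq_one h'.pow_eq_one)
      mul_self_eq := Subtype.ext (Prod.ext h.mul_self_eq h'.mul_self_eq)
      conj_eq := Subtype.ext (Prod.ext h.conj_eq h'.conj_eq) }
  have hfst : Function.Bijective ((MonoidHom.fst G K).comp graph.subtype) :=
    huv.bijective_of_surjective hm hG (h.surjective_of_mem_range ⟨u, rfl⟩ ⟨v, rfl⟩)
  have hsnd : Function.Bijective ((MonoidHom.snd G K).comp graph.subtype) :=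
    huv.bijective_of_surjective hm hK (h'.surjective_of_mem_range ⟨u, rfl⟩ ⟨v, rfl⟩)
  exact ⟨(MulEquiv.ofBijective _ hfst).symm.trans (MulEquiv.ofBijective _ hsnd)⟩

end IsMetacyclicPair

theorem isMetacyclicPair_dihedralGroup (m : ℕ) :
    IsMetacyclicPair m (-1) 0 (DihedralGroup.r 1 : DihedralGroup m) (DihedralGroup.sr 0) where
  closure_eq_top := by
    refine eq_top_iff.2 fun g _ ↦ ?_
    have hr (i : ZMod m) : DihedralGroup.r i ∈ Subgroup.closure
        {(DihedralGroup.r 1 : DihedralGroup m), DihedralGroup.sr 0} := by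
      obtain ⟨i, rfl⟩ := ZMod.intCast_surjective i
      rw [← DihedralGroup.r_one_zpow]
      exact zpow_mem (Subgroup.subset_closure (Set.mem_insert _ _)) i
    rcases g with i | i
    · exact hr i
    · rw [← zero_add i, ← DihedralGroup.sr_mul_r]
      exact mul_mem (Subgroup.subset_closure (Set.mem_insert_of_mem _ rfl)) (hr i)
  pow_eq_one := DihedralGroup.r_one_pow_n
  mul_self_eq := by simp
  conj_eq := by simp

theorem nonempty_mulEquiv_dihedralGroup_iff (hm : m ≠ 0) (hG : Nat.card G = m * 2) :
    Nonempty (G ≃* DihedralGroup m) ↔ ∃ x y : G, IsMetacyclicPair m (-1) 0 x y := by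
  constructor
  · rintro ⟨e⟩
    exact ⟨_, _, (isMetacyclicPair_dihedralGroup m).map (f := e.symm.toMonoidHom) e.symm.surjective⟩
  · rintro ⟨x, y, h⟩
    exact h.nonempty_mulEquiv (isMetacyclicPair_dihedralGroup m) hm hG
      (by rw [DihedralGroup.nat_card, mul_comm])

theorem isMetacyclicPair_quaternionGroup (m : ℕ) [NeZero m] :
    IsMetacyclicPair (2 * m) (-1) m (QuaternionGroup.a 1 : QuaternionGroup m)
      (QuaternionGroup.xa 0) where
  closure_eq_top := by
    refine eq_top_iff.2 fun g _ ↦ ?_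
    have ha (i : ZMod (2 * m)) : QuaternionGroup.a i ∈ Subgroup.closure
        {(QuaternionGroup.a 1 : QuaternionGroup m), QuaternionGroup.xa 0} := by
      obtain ⟨i, rfl⟩ := ZMod.natCast_zmod_surjective i
      rw [← QuaternionGroup.a_one_pow]
      exact pow_mem (Subgroup.subset_closure (Set.mem_insert _ _)) i
    rcases g with i | i
    · exact ha i
    · rw [← zero_add i, ← QuaternionGroup.xa_mul_a]
      exact mul_mem (Subgroup.subset_closure (Set.mem_insert_of_mem _ rfl)) (ha i)
  pow_eq_one := QuaternionGroup.a_one_pow_n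
  mul_self_eq := by simp
  conj_eq := by
    rw [mul_inv_eq_iff_eq_mul, zpow_neg_one, eq_inv_mul_iff_mul_eq]
    simp

theorem nonempty_mulEquiv_quaternionGroup_iff (hm : m ≠ 0) (hG : Nat.card G = 2 * m * 2) :
    Nonempty (G ≃* QuaternionGroup m) ↔ ∃ x y : G, IsMetacyclicPair (2 * m) (-1) m x y := by
  have : NeZero m := ⟨hm⟩
  constructor
  · rintro ⟨e⟩
    exact ⟨_, _,
      (isMetacyclicPair_quaternionGroup m).map (f := e.symm.toMonoidHom) e.symm.surjective⟩
  · rintro ⟨x, y, h⟩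
    refine h.nonempty_mulEquiv (isMetacyclicPair_quaternionGroup m) (by positivity) hG ?_
    rw [Nat.card_eq_fintype_card, QuaternionGroup.card]
    ring

theorem isMetacyclicPair_semidihedralGroup (n : ℕ) :
    IsMetacyclicPair (2 ^ (n - 1)) (2 ^ (n - 2) - 1) 0
      (PresentedGroup.of 0 : SemidihedralGroup n) (PresentedGroup.of 1 : SemidihedralGroup n) where
  closure_eq_top := by
    rw [← PresentedGroup.closure_range_of (semidihedralRels n)]
    congr 1
    ext g
    simp [Fin.exists_fin_two, eq_comm]
  pow_eq_one := PresentedGroup.one_of_mem (rels := semidihedralRels n) (Or.inl rfl)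
  mul_self_eq := by
    rw [← pow_two, zpow_zero]
    exact PresentedGroup.one_of_mem (rels := semidihedralRels n) (Or.inr (Or.inl rfl))
  conj_eq := by
    have hrel : (PresentedGroup.of 1 : SemidihedralGroup n) * (PresentedGroup.of 0) *
        (PresentedGroup.of 1)⁻¹ = PresentedGroup.of 0 ^ (2 ^ (n - 2) - 1) := mul_inv_eq_one.1
      (PresentedGroup.one_of_mem (rels := semidihedralRels n) (Or.inr (Or.inr rfl)))
    have hcast : ((2 ^ (n - 2) - 1 : ℕ) : ℤ) = 2 ^ (n - 2) - 1 := by simp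
    rw [← hcast, zpow_natCast]
    exact hrel

theorem nonempty_mulEquiv_semidihedralGroup_iff {n : ℕ} (hG : Nat.card G = 2 ^ (n - 1) * 2) :
    Nonempty (G ≃* SemidihedralGroup n) ↔
      ∃ x y : G, IsMetacyclicPair (2 ^ (n - 1)) (2 ^ (n - 2) - 1) 0 x y := by
  constructor
  · rintro ⟨e⟩
    exact ⟨_, _,
      (isMetacyclicPair_semidihedralGroup n).map (f := e.symm.toMonoidHom) e.symm.surjective⟩
  · rintro ⟨x, y, h⟩
    have hcast : ((2 ^ (n - 2) - 1 : ℕ) : ℤ) = 2 ^ (n - 2) - 1 := by simp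
    have hconj : y * x * y⁻¹ = x ^ (2 ^ (n - 2) - 1) := by
      rw [h.conj_eq, ← hcast, zpow_natCast]
    let f : SemidihedralGroup n →* G :=
      PresentedGroup.toGroup (rels := semidihedralRels n) (f := ![x, y]) (by
        rintro r (rfl | rfl | rfl)
        · simpa using h.pow_eq_one
        · simpa [pow_two] using h.mul_self_eq
        · simpa [mul_inv_eq_one] using hconj)
    have hf : Function.Surjective f := h.surjective_of_mem_range
      ⟨_, PresentedGroup.toGroup.of _ (x := 0)⟩ ⟨_, PresentedGroup.toGroup.of _ (x := 1)⟩
    exact ⟨(MulEquiv.ofBijective f ((isMetacyclicPair_semidihedralGroup n).bijective_of_surjective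
      (by positivity) hG hf)).symm⟩

end Metacyclic

-- A character that is nontrivial at `z` has trivial kernel, hence embeds `A` into `ℂˣ`.
theorem isCyclic_of_forall_mem_of_ne_bot {A : Type*} [CommGroup A] [Finite A] {z : A} (hz : z ≠ 1)
    (h : ∀ K : Subgroup A, K ≠ ⊥ → z ∈ K) : IsCyclic A := by
  obtain ⟨χ, hχ⟩ := CommGroup.exists_apply_ne_one_of_hasEnoughRootsOfUnity A ℂ hz
  have hker : χ.ker = ⊥ := by
    by_contra hne
    exact hχ (h _ hne)
  exact isCyclic_of_injective_ringHom ((Units.coeHom ℂ).comp χ)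
    (Units.val_injective.comp (χ.ker_eq_bot_iff.1 hker))

section AbelianIndexTwo

open Subgroup

variable {G : Type*} [Group G] {H : Subgroup G} {b h t u z : G}

theorem exists_ne_one_mem_iff_of_card_eq_two {K : Subgroup G} (hK : Nat.card K = 2) :
    ∃ z ≠ 1, ∀ u, u ∈ K ↔ u = 1 ∨ u = z := by
  obtain ⟨z, hz, hunique⟩ := (Nat.card_eq_two_iff' (1 : K)).1 hK
  refine ⟨z, by simpa using hz, fun u ↦ ⟨fun hu ↦ or_iff_not_imp_left.2 fun hu1 ↦ ?_, ?_⟩⟩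
  · exact congrArg Subtype.val (hunique ⟨u, hu⟩ (by simpa using hu1))
  · rintro (rfl | rfl)
    exacts [one_mem _, z.2]

theorem mul_self_eq_one_of_card_eq_two {K : Subgroup G} (hK : Nat.card K = 2) (hu : u ∈ K) :
    u * u = 1 := by
  have hpow : (⟨u, hu⟩ : K) ^ 2 = 1 := hK ▸ pow_card_eq_one'
  simpa [pow_two] using congrArg Subtype.val hpow

theorem exists_orderOf_pow_eq_four [Finite G] (hG : IsPGroup 2 G)
    (hu : u * u ≠ 1) : ∃ j : ℕ, orderOf (u ^ j) = 4 := by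
  obtain ⟨k, hk⟩ := IsPGroup.iff_orderOf.1 hG u
  have hk2 : 2 ≤ k := by
    by_contra! hlt
    refine hu (pow_two u ▸ orderOf_dvd_iff_pow_eq_one.1 ?_)
    exact hk ▸ (pow_dvd_pow 2 (Nat.le_of_lt_succ hlt)).trans (by norm_num)
  have hdvd : 4 ∣ orderOf u := hk ▸ pow_dvd_pow 2 hk2
  exact ⟨_, orderOf_pow_orderOf_div (orderOf_pos u).ne' hdvd⟩

variable [IsMulCommutative H]

theorem mem_center_of_commute_of_notMem (hH : H.index = 2) (hb : b ∉ H) (hh : h ∈ H)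
    (hbh : Commute b h) : h ∈ center G := by
  refine mem_center_iff.2 fun g ↦ ?_
  by_cases hg : g ∈ H
  · exact setLike_mul_comm hg hh
  · have hgb : g * b⁻¹ ∈ H := by simp [mul_mem_iff_of_index_two hH, hg, hb]
    have hcomm : Commute (g * b⁻¹ * b) h := Commute.mul_left (setLike_mul_comm hgb hh) hbh
    simpa using hcomm.eq

theorem mul_conj_mem_center (hH : H.index = 2) (hb : b ∉ H) (hh : h ∈ H) :
    h * (b * h * b⁻¹) ∈ center G := by
  have hN := normal_of_index_eq_two hH
  have hconj : b * h * b⁻¹ ∈ H := hN.conj_mem h hh b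
  refine mem_center_of_commute_of_notMem hH hb (mul_mem hh hconj) ?_
  have hbb : b * b * h * (b * b)⁻¹ = h := by
    rw [setLike_mul_comm (mul_self_mem_of_index_two hH b) hh, mul_inv_cancel_right]
  refine mul_inv_eq_iff_eq_mul.1 ?_
  calc b * (h * (b * h * b⁻¹)) * b⁻¹ = b * h * b⁻¹ * (b * b * h * (b * b)⁻¹) := by group
    _ = h * (b * h * b⁻¹) := by rw [hbb, setLike_mul_comm hconj hh]

theorem center_le_of_index_eq_two (hH : H.index = 2) (hG : center G ≠ ⊤) : center G ≤ H := by
  intro c hc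
  by_contra hcH
  have hle : H ≤ center G := fun h hh ↦
    mem_center_of_commute_of_notMem hH hcH hh (mem_center_iff.1 hc h).symm
  refine hG (eq_top_iff.2 fun g _ ↦ ?_)
  by_cases hg : g ∈ H
  · exact hle hg
  · have hgc : g * c⁻¹ ∈ H := by simp [mul_mem_iff_of_index_two hH, hg, hcH]
    simpa using mul_mem (hle hgc) hc

theorem conj_eq_inv_or_of_mem (hH : H.index = 2) (hb : b ∉ H)
    (hz : ∀ u, u ∈ center G ↔ u = 1 ∨ u = z) (hh : h ∈ H) :
    b * h * b⁻¹ = h⁻¹ ∨ b * h * b⁻¹ = h⁻¹ * z :=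
  ((hz _).1 (mul_conj_mem_center hH hb hh)).imp eq_inv_of_mul_eq_one_right eq_inv_mul_of_mul_eq

-- Otherwise a power `w` of `u` has order `4`, and `w * t` is central but squares to `z`.
theorem mul_self_eq_one_of_conj_eq_inv [Finite G] (hG : IsPGroup 2 G) (hH : H.index = 2)
    (hb : b ∉ H) (hz : ∀ u, u ∈ center G ↔ u = 1 ∨ u = z) (hzz : z * z = 1) (ht : t ∈ H)
    (htt : t * t = 1) (hbt : b * t * b⁻¹ = t * z) (hu : u ∈ H) (hbu : b * u * b⁻¹ = u⁻¹) :
    u * u = 1 := by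
  by_contra huu
  obtain ⟨j, hj⟩ := exists_orderOf_pow_eq_four hG huu
  set w := u ^ j with hw
  have hwH : w ∈ H := pow_mem hu j
  have hbw : b * w * b⁻¹ = w⁻¹ := by rw [hw, ← conj_pow, hbu, inv_pow]
  have hw4 : w * w * (w * w) = 1 := by
    have hpow := pow_orderOf_eq_one w
    rw [hj] at hpow
    rw [← pow_two, ← pow_two, ← pow_mul, hpow]
  have hww : w * w ≠ 1 := fun hw1 ↦ by
    have := orderOf_le_of_pow_eq_one two_pos ((pow_two w).trans hw1)
    omega
  have hwz : w * w = z := by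
    refine ((hz _).1 (mem_center_of_commute_of_notMem hH hb (mul_mem hwH hwH) ?_)).resolve_left hww
    refine mul_inv_eq_iff_eq_mul.1 ?_
    rw [← conj_mul, hbw, ← mul_inv_rev, inv_eq_of_mul_eq_one_left hw4]
  have hwt : w * t ∈ center G := by
    refine mem_center_of_commute_of_notMem hH hb (mul_mem hwH ht) (mul_inv_eq_iff_eq_mul.1 ?_)
    rw [← conj_mul, hbw, hbt, ← hwz, setLike_mul_comm ht (mul_mem hwH hwH), mul_assoc w,
      inv_mul_cancel_left]
  have hsq : w * t * (w * t) = 1 := by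
    rcases (hz _).1 hwt with h1 | h1 <;> simp [h1, hzz]
  refine hww ?_
  rw [← hsq, mul_assoc, ← mul_assoc t, setLike_mul_comm ht hwH, mul_assoc w t t, htt, mul_one]

theorem mul_self_eq_one_of_mem_of_conj_eq_mul [Finite G] (hG : IsPGroup 2 G) (hH : H.index = 2)
    (hb : b ∉ H) (hz : ∀ u, u ∈ center G ↔ u = 1 ∨ u = z) (hzz : z * z = 1) (ht : t ∈ H)
    (htt : t * t = 1) (hbt : b * t * b⁻¹ = t * z) (hu : u ∈ H) : u * u = 1 := by
  have hzc : z ∈ center G := (hz z).2 (Or.inr rfl)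
  rcases conj_eq_inv_or_of_mem hH hb hz hu with hbu | hbu
  · exact mul_self_eq_one_of_conj_eq_inv hG hH hb hz hzz ht htt hbt hu hbu
  · have hut : u * t * (u * t) = 1 := by
      refine mul_self_eq_one_of_conj_eq_inv hG hH hb hz hzz ht htt hbt (mul_mem hu ht) ?_
      rw [← conj_mul, hbu, hbt, mul_inv_rev, inv_eq_of_mul_eq_one_left htt, mul_assoc,
        ← mem_center_iff.1 hzc, mul_assoc, hzz, mul_one, setLike_mul_comm (inv_mem hu) ht]
    rwa [Commute.mul_mul_mul_comm (setLike_mul_comm ht hu), htt, mul_one] at hut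

theorem card_dvd_four_of_mul_self_eq_one [Finite G] (hG : IsPGroup 2 G) (hH : H.index = 2)
    (hcenter : Nat.card (center G) = 2) (ht : t ∈ H) (htt : t * t = 1) (htc : t ∉ center G) :
    Nat.card H ∣ 4 := by
  obtain ⟨z, -, hz⟩ := exists_ne_one_mem_iff_of_card_eq_two hcenter
  have hzc : z ∈ center G := (hz z).2 (Or.inr rfl)
  have hzz : z * z = 1 := mul_self_eq_one_of_card_eq_two hcenter hzc
  obtain ⟨b, hb, -⟩ := index_eq_two_iff_exists_notMem_and.1 hH
  have mem_center_of_conj_eq {u : G} (hu : u ∈ H) (hbu : b * u * b⁻¹ = u) : u ∈ center G :=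
    mem_center_of_commute_of_notMem hH hb hu (mul_inv_eq_iff_eq_mul.1 hbu)
  have mem_center_or {u : G} (hu : u ∈ H) (huu : u * u = 1) :
      u ∈ center G ∨ b * u * b⁻¹ = u * z := by
    have := conj_eq_inv_or_of_mem hH hb hz hu
    rw [inv_eq_of_mul_eq_one_left huu] at this
    exact this.imp_left (mem_center_of_conj_eq hu)
  have hbt : b * t * b⁻¹ = t * z := (mem_center_or ht htt).resolve_left htc
  have hindex : (center G).relIndex H ∣ 2 := by
    refine index_dvd_two_iff'.2 ⟨⟨t, ht⟩, fun ⟨u, hu⟩ ↦ ?_⟩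
    have huu : u * u = 1 := mul_self_eq_one_of_mem_of_conj_eq_mul hG hH hb hz hzz ht htt hbt hu
    refine (mem_center_or hu huu).symm.imp_left fun hbu ↦ ?_
    refine mem_center_of_conj_eq (mul_mem ht hu) ?_
    change b * (t * u) * b⁻¹ = t * u
    rw [← conj_mul, hbt, hbu, Commute.mul_mul_mul_comm (mem_center_iff.1 hzc u).symm, hzz, mul_one]
  have hle : center G ≤ H := center_le_of_index_eq_two hH fun htop ↦ htc (htop ▸ mem_top t)
  have hcard := relIndex_mul_relIndex ⊥ _ _ bot_le hle
  rw [relIndex_bot_left, relIndex_bot_left, hcenter] at hcard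
  exact hcard ▸ mul_dvd_mul_left 2 hindex

open scoped IsMulCommutative in
theorem isCyclic_of_forall_mul_self_eq_one_mem_center [Finite G] (hG : IsPGroup 2 G)
    (hcenter : Nat.card (center G) = 2) (hle : center G ≤ H)
    (h : ∀ t ∈ H, t * t = 1 → t ∈ center G) : IsCyclic H := by
  obtain ⟨z, hz1, hz⟩ := exists_ne_one_mem_iff_of_card_eq_two hcenter
  have hzH : z ∈ H := hle ((hz z).2 (Or.inr rfl))
  refine isCyclic_of_forall_mem_of_ne_bot (z := (⟨z, hzH⟩ : H)) (by simpa using hz1) fun K hK ↦ ?_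
  have : Nontrivial K := (nontrivial_iff_ne_bot K).2 hK
  obtain ⟨k, hk0, hk⟩ := ((hG.to_subgroup H).to_subgroup K).nontrivial_iff_card.1 this
  obtain ⟨t, ht⟩ := exists_prime_orderOf_dvd_card' 2 (hk ▸ dvd_pow_self 2 hk0.ne')
  have htt : (t : H) * t = 1 := by
    rw [← pow_two]
    exact_mod_cast ht ▸ pow_orderOf_eq_one t
  have ht1 : ((t : H) : G) ≠ 1 := fun ht1 ↦ by
    simp [show t = 1 from Subtype.ext (Subtype.ext ht1)] at ht
  have htz : ((t : H) : G) = z :=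
    ((hz _).1 (h _ (t : H).2 (congrArg Subtype.val htt))).resolve_left ht1
  exact (Subtype.ext htz : (t : H) = ⟨z, hzH⟩) ▸ t.2

end AbelianIndexTwo

section MaximalCyclic

open Subgroup

variable {G : Type*} [Group G] {n : ℕ} {x y : G}

theorem exists_index_zpowers_eq_two_of_card_eq_eight (hG : Nat.card G = 8)
    (hcenter : center G ≠ ⊤) : ∃ x : G, (zpowers x).index = 2 := by
  have : Finite G := Nat.finite_of_card_ne_zero (by omega)
  obtain ⟨x, hx⟩ : ∃ x : G, x * x ≠ 1 := by
    by_contra! hsq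
    refine hcenter (eq_top_iff.2 fun u _ ↦ mem_center_iff.2 fun g ↦ ?_)
    have hinv (v : G) : v⁻¹ = v := inv_eq_of_mul_eq_one_left (hsq v)
    rw [← hinv (g * u), mul_inv_rev, hinv, hinv]
  obtain ⟨j, hj⟩ := exists_orderOf_pow_eq_four (IsPGroup.of_card (n := 3) hG) hx
  have hcard := (zpowers (x ^ j)).card_mul_index
  rw [Nat.card_zpowers, hj, hG] at hcard
  exact ⟨x ^ j, by omega⟩

theorem exists_index_zpowers_eq_two {H : Subgroup G} [IsMulCommutative H] (hn : 3 ≤ n)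
    (hG : Nat.card G = 2 ^ n) (hcenter : Nat.card (center G) = 2) (hH : H.index = 2) :
    ∃ x : G, (zpowers x).index = 2 := by
  have : Finite G := Nat.finite_of_card_ne_zero (by rw [hG]; positivity)
  have h8 : 2 ^ 3 ≤ Nat.card G := hG ▸ Nat.pow_le_pow_right two_pos hn
  have hp : IsPGroup 2 G := IsPGroup.of_card hG
  have hne : center G ≠ ⊤ := fun htop ↦ by
    rw [htop, card_top] at hcenter
    omega
  by_cases hinv : ∀ t ∈ H, t * t = 1 → t ∈ center G
  · have := isCyclic_of_forall_mul_self_eq_one_mem_center hp hcenter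
      (center_le_of_index_eq_two hH hne) hinv
    obtain ⟨x, rfl⟩ := H.isCyclic_iff_exists_zpowers_eq_top.1 this
    exact ⟨x, hH⟩
  · push Not at hinv
    obtain ⟨t, ht, htt, htc⟩ := hinv
    have hcard := H.card_mul_index
    rw [hH] at hcard
    have := Nat.le_of_dvd four_pos (card_dvd_four_of_mul_self_eq_one hp hH hcenter ht htt htc)
    exact exists_index_zpowers_eq_two_of_card_eq_eight (by omega) hne

theorem eq_one_or_eq_pow_of_mul_self_eq_one {k : ℕ} {u : G} (hx : orderOf x = 2 * k)
    (hu : u ∈ zpowers x) (huu : u * u = 1) : u = 1 ∨ u = x ^ k := by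
  obtain ⟨i, rfl⟩ := mem_zpowers_iff.1 hu
  have hdvd : ((2 * k : ℕ) : ℤ) ∣ 2 * i := by
    rwa [← hx, orderOf_dvd_iff_zpow_eq_one, two_mul, zpow_add]
  obtain ⟨j, rfl⟩ : (k : ℤ) ∣ i := by
    push_cast at hdvd
    exact Int.dvd_of_mul_dvd_mul_left two_ne_zero hdvd
  have h2k : x ^ ((2 : ℤ) * k) = 1 := by
    exact_mod_cast hx ▸ pow_orderOf_eq_one x
  rcases Int.even_or_odd' j with ⟨l, rfl | rfl⟩
  · left
    rw [show (k * (2 * l) : ℤ) = 2 * k * l by ring, zpow_mul, h2k, one_zpow]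
  · right
    rw [show (k * (2 * l + 1) : ℤ) = 2 * k * l + k by ring, zpow_add, zpow_mul, h2k, one_zpow,
      one_mul, zpow_natCast]

theorem closure_pair_eq_top_of_index_eq_two (hx : (zpowers x).index = 2) (hy : y ∉ zpowers x) :
    closure {x, y} = ⊤ := by
  have hle : zpowers x ≤ closure {x, y} :=
    zpowers_le.2 (subset_closure (Set.mem_insert _ _))
  have hyc : y ∈ closure {x, y} := subset_closure (Set.mem_insert_of_mem _ rfl)
  refine eq_top_iff.2 fun g _ ↦ ?_
  by_cases hg : g ∈ zpowers x
  · exact hle hg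
  · have hgy : g * y⁻¹ ∈ zpowers x := by simp [mul_mem_iff_of_index_two hx, hg, hy]
    simpa using mul_mem (hle hgy) hyc

theorem exists_isMetacyclicPair_of_card_center_eq_two {k : ℕ} (hx : orderOf x = 2 * k)
    (hindex : (zpowers x).index = 2) (hne : center G ≠ ⊤) (hcenter : Nat.card (center G) = 2) :
    ∃ (y : G) (r s : ℤ), (r = -1 ∨ r = k - 1) ∧ (s = 0 ∨ s = k) ∧
      IsMetacyclicPair (2 * k) r s x y := by
  obtain ⟨y, hy, -⟩ := index_eq_two_iff_exists_notMem_and.1 hindex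
  have eq_one_or {u : G} (hu : u ∈ center G) : u = 1 ∨ u = x ^ k :=
    eq_one_or_eq_pow_of_mul_self_eq_one hx (center_le_of_index_eq_two hindex hne hu)
      (mul_self_eq_one_of_card_eq_two hcenter hu)
  have hyy : y * y ∈ center G := mem_center_of_commute_of_notMem hindex hy
    (mul_self_mem_of_index_two hindex y) ((Commute.refl y).mul_right (Commute.refl y))
  obtain ⟨r, hr, hconj⟩ : ∃ r : ℤ, (r = -1 ∨ r = k - 1) ∧ y * x * y⁻¹ = x ^ r := by
    rcases eq_one_or (mul_conj_mem_center hindex hy (mem_zpowers x)) with h | h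
    · exact ⟨-1, Or.inl rfl, by rw [eq_inv_of_mul_eq_one_right h, zpow_neg_one]⟩
    · refine ⟨k - 1, Or.inr rfl, ?_⟩
      rw [eq_inv_mul_of_mul_eq h, sub_eq_neg_add, zpow_add, zpow_neg_one, zpow_natCast]
  obtain ⟨s, hs, hmul⟩ : ∃ s : ℤ, (s = 0 ∨ s = k) ∧ y * y = x ^ s := by
    rcases eq_one_or hyy with h | h
    · exact ⟨0, Or.inl rfl, by rw [h, zpow_zero]⟩
    · exact ⟨k, Or.inr rfl, by rw [h, zpow_natCast]⟩
  exact ⟨y, r, s, hr, hs, closure_pair_eq_top_of_index_eq_two hindex hy,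
    hx ▸ pow_orderOf_eq_one x, hmul, hconj⟩

theorem IsMetacyclicPair.mul_left {m : ℕ} {r s : ℤ} (h : IsMetacyclicPair m r s x y) :
    IsMetacyclicPair m r (1 + r + s) x (x * y) where
  closure_eq_top := by
    refine eq_top_iff.2 (h.closure_eq_top ▸ (closure_le _).2 ?_)
    have hx : x ∈ closure {x, x * y} := subset_closure (Set.mem_insert _ _)
    have hxy : x * y ∈ closure {x, x * y} := subset_closure (Set.mem_insert_of_mem _ rfl)
    rintro _ (rfl | rfl)
    · exact hx
    · simpa using mul_mem (inv_mem hx) hxy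
  pow_eq_one := h.pow_eq_one
  mul_self_eq :=
    calc x * y * (x * y) = x * (y * x * y⁻¹) * (y * y) := by group
      _ = x ^ (1 + r + s) := by rw [h.conj_eq, h.mul_self_eq, zpow_add, zpow_add, zpow_one]
  conj_eq :=
    calc x * y * x * (x * y)⁻¹ = x * (y * x * y⁻¹) * x⁻¹ := by group
      _ = x ^ r := by rw [h.conj_eq]; group

theorem exists_isMetacyclicPair_dihedral_or_quaternion_or_semidihedral {k : ℕ}
    (hx : orderOf x = 2 * k) (hindex : (zpowers x).index = 2) (hne : center G ≠ ⊤)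
    (hcenter : Nat.card (center G) = 2) :
    ∃ y : G, IsMetacyclicPair (2 * k) (-1) 0 x y ∨ IsMetacyclicPair (2 * k) (-1) k x y ∨
      IsMetacyclicPair (2 * k) (k - 1) 0 x y := by
  obtain ⟨y, r, s, hr, hs, h⟩ :=
    exists_isMetacyclicPair_of_card_center_eq_two hx hindex hne hcenter
  rcases hr with rfl | rfl <;> rcases hs with rfl | rfl
  · exact ⟨y, Or.inl h⟩
  · exact ⟨y, Or.inr (Or.inl h)⟩
  · exact ⟨y, Or.inr (Or.inr h)⟩
  · refine ⟨x * y, Or.inr (Or.inr { h.mul_left with mul_self_eq := ?_ })⟩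
    rw [h.mul_left.mul_self_eq, zpow_zero, ← h.pow_eq_one, ← zpow_natCast]
    congr 1
    push_cast
    ring

theorem IsMetacyclicPair.mem_center_of_commute {m : ℕ} {r s : ℤ} (h : IsMetacyclicPair m r s x y)
    (hyx : Commute y x) : x ∈ center G := by
  have hle : closure {x, y} ≤ centralizer {x} := by
    rw [closure_le]
    rintro _ (rfl | rfl)
    · exact mem_centralizer_singleton_iff.2 rfl
    · exact mem_centralizer_singleton_iff.2 hyx
  exact mem_center_iff.2 fun g ↦
    mem_centralizer_singleton_iff.1 (hle (h.closure_eq_top ▸ mem_top g))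

theorem IsMetacyclicPair.commute_zpow_iff {k : ℕ} {q s : ℤ}
    (h : IsMetacyclicPair (2 * k) (2 * q + 1) s x y) (hx : orderOf x = 2 * k)
    (hq : IsCoprime (k : ℤ) q) (i : ℤ) : Commute y (x ^ i) ↔ (k : ℤ) ∣ i :=
  calc Commute y (x ^ i) ↔ y * x ^ i * y⁻¹ = x ^ i := mul_inv_eq_iff_eq_mul.symm
    _ ↔ x ^ ((2 * q + 1) * i - i) = 1 := by
      rw [← conj_zpow, h.conj_eq, ← zpow_mul, zpow_sub, mul_inv_eq_one]
    _ ↔ (2 * k : ℤ) ∣ 2 * (q * i) := by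
      rw [← orderOf_dvd_iff_zpow_eq_one, hx, show (2 * q + 1) * i - i = 2 * (q * i) by ring,
        Nat.cast_mul, Nat.cast_two]
    _ ↔ (k : ℤ) ∣ q * i := mul_dvd_mul_iff_left two_ne_zero
    _ ↔ (k : ℤ) ∣ i := ⟨hq.dvd_of_dvd_mul_left, (dvd_mul_of_dvd_right · q)⟩

theorem IsMetacyclicPair.center_eq_zpowers {k : ℕ} {q s : ℤ}
    (h : IsMetacyclicPair (2 * k) (2 * q + 1) s x y) (hk : 2 ≤ k) (hG : Nat.card G = 2 * k * 2)
    (hq : IsCoprime (k : ℤ) q) : center G = zpowers (x ^ k) := by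
  have commute_iff := h.commute_zpow_iff (h.orderOf_eq hG) hq
  have hindex : (zpowers x).index = 2 := h.index_zpowers (by omega) hG
  have hyx : ¬ Commute y x := by
    rw [← zpow_one x, commute_iff, ← Nat.cast_one, Int.natCast_dvd_natCast, Nat.dvd_one]
    omega
  have hy : y ∉ zpowers x := fun hy ↦ hyx (setLike_mul_comm hy (mem_zpowers x))
  have hne : center G ≠ ⊤ := fun htop ↦
    hyx (mem_center_iff.1 (htop ▸ mem_top x) y)
  ext u
  refine ⟨fun hu ↦ ?_, fun hu ↦ ?_⟩
  · obtain ⟨i, rfl⟩ := mem_zpowers_iff.1 (center_le_of_index_eq_two hindex hne hu)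
    obtain ⟨j, rfl⟩ := (commute_iff i).1 (mem_center_iff.1 hu y)
    exact mem_zpowers_iff.2 ⟨j, by rw [zpow_mul, zpow_natCast]⟩
  · obtain ⟨j, rfl⟩ := mem_zpowers_iff.1 hu
    rw [← zpow_natCast, ← zpow_mul]
    exact mem_center_of_commute_of_notMem hindex hy (zpow_mem (mem_zpowers x) _)
      ((commute_iff _).2 (dvd_mul_right _ _))

theorem IsMetacyclicPair.card_center_eq_two {k : ℕ} {q s : ℤ}
    (h : IsMetacyclicPair (2 * k) (2 * q + 1) s x y) (hk : 2 ≤ k) (hG : Nat.card G = 2 * k * 2)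
    (hq : IsCoprime (k : ℤ) q) : Nat.card (center G) = 2 := by
  rw [h.center_eq_zpowers hk hG hq, Nat.card_zpowers, orderOf_pow_of_dvd (by omega)
    (h.orderOf_eq hG ▸ dvd_mul_left k 2), h.orderOf_eq hG, Nat.mul_div_cancel _ (by omega)]

theorem IsMetacyclicPair.four_le_of_card_center_eq_two {s : ℤ} (hn : 3 ≤ n)
    (h : IsMetacyclicPair (2 * 2 ^ (n - 2)) (2 ^ (n - 2) - 1) s x y)
    (hx : orderOf x = 2 * 2 ^ (n - 2)) (hcenter : Nat.card (center G) = 2) : 4 ≤ n := by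
  by_contra! hlt
  obtain rfl : n = 3 := by omega
  have hyx : Commute y x := mul_inv_eq_iff_eq_mul.1 (by simpa using h.conj_eq)
  have hxx := mul_self_eq_one_of_card_eq_two hcenter (h.mem_center_of_commute hyx)
  have := orderOf_le_of_pow_eq_one two_pos ((pow_two x).trans hxx)
  omega

theorem exists_isMetacyclicPair_of_index_eq_two {H : Subgroup G} [IsMulCommutative H] (hn : 3 ≤ n)
    (hG : Nat.card G = 2 * 2 ^ (n - 2) * 2) (hcenter : Nat.card (center G) = 2)
    (hH : H.index = 2) :
    (∃ x y : G, IsMetacyclicPair (2 * 2 ^ (n - 2)) (-1) 0 x y) ∨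
      (∃ x y : G, IsMetacyclicPair (2 * 2 ^ (n - 2)) (-1) (2 ^ (n - 2) : ℕ) x y) ∨
      (4 ≤ n ∧ ∃ x y : G, IsMetacyclicPair (2 * 2 ^ (n - 2)) (2 ^ (n - 2) - 1) 0 x y) := by
  have hpow : 2 * 2 ^ (n - 2) * 2 = 2 ^ n := by
    rw [← pow_succ', ← pow_succ]
    congr 1
    omega
  obtain ⟨x, hindex⟩ := exists_index_zpowers_eq_two hn (hG.trans hpow) hcenter hH
  have hx : orderOf x = 2 * 2 ^ (n - 2) := by
    have hcard := (zpowers x).card_mul_index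
    rw [Nat.card_zpowers, hindex] at hcard
    omega
  have hne : center G ≠ ⊤ := fun htop ↦ by
    have : 0 < 2 ^ (n - 2) := by positivity
    rw [htop, card_top] at hcenter
    omega
  obtain ⟨y, hD | hQ | hSD⟩ :=
    exists_isMetacyclicPair_dihedral_or_quaternion_or_semidihedral hx hindex hne hcenter
  · exact Or.inl ⟨x, y, hD⟩
  · exact Or.inr (Or.inl ⟨x, y, hQ⟩)
  · push_cast at hSD
    exact Or.inr (Or.inr ⟨hSD.four_le_of_card_center_eq_two hn hx hcenter, x, y, hSD⟩)

theorem isCoprime_two_pow_sub_one {l : ℕ} (hl : l ≠ 0) (j : ℕ) :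
    IsCoprime (((2 ^ j : ℕ)) : ℤ) (2 ^ l - 1) := by
  push_cast
  refine IsCoprime.pow_left ⟨2 ^ (l - 1), -1, ?_⟩
  rw [← pow_succ, Nat.sub_add_cancel (Nat.pos_of_ne_zero hl)]
  ring

theorem card_center_eq_two_and_exists_isMulCommutative_iff (hn : 3 ≤ n) (hG : Nat.card G = 2 ^ n) :
    (Nat.card (center G) = 2 ∧ ∃ H : Subgroup G, IsMulCommutative H ∧ H.index = 2) ↔
      Nonempty (G ≃* DihedralGroup (2 ^ (n - 1))) ∨
      Nonempty (G ≃* QuaternionGroup (2 ^ (n - 2))) ∨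
      (4 ≤ n ∧ Nonempty (G ≃* SemidihedralGroup n)) := by
  have hpow : 2 ^ (n - 1) = 2 * 2 ^ (n - 2) := by
    rw [← pow_succ', show n - 2 + 1 = n - 1 by omega]
  have hcard : Nat.card G = 2 * 2 ^ (n - 2) * 2 := by
    rw [hG, ← hpow, ← pow_succ, Nat.sub_add_cancel (by omega)]
  have hk : 2 ≤ 2 ^ (n - 2) := Nat.le_self_pow (by omega) 2
  rw [nonempty_mulEquiv_dihedralGroup_iff (by positivity) (hpow ▸ hcard),
    nonempty_mulEquiv_quaternionGroup_iff (by positivity) hcard,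
    nonempty_mulEquiv_semidihedralGroup_iff (hpow ▸ hcard), hpow]
  constructor
  · rintro ⟨hcenter, H, hHcomm, hH⟩
    exact exists_isMetacyclicPair_of_index_eq_two hn hcard hcenter hH
  · have of_pair {x y : G} {r q s : ℤ} (hr : r = 2 * q + 1)
        (hq : IsCoprime ((2 ^ (n - 2) : ℕ) : ℤ) q)
        (h : IsMetacyclicPair (2 * 2 ^ (n - 2)) r s x y) :
        Nat.card (center G) = 2 ∧ ∃ H : Subgroup G, IsMulCommutative H ∧ H.index = 2 :=
      ⟨(hr ▸ h).card_center_eq_two hk hcard hq, zpowers x, inferInstance,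
        h.index_zpowers (by positivity) hcard⟩
    rintro (⟨x, y, h⟩ | ⟨x, y, h⟩ | ⟨hn4, x, y, h⟩)
    · exact of_pair (q := -1) rfl isCoprime_one_right.neg_right h
    · exact of_pair (q := -1) rfl isCoprime_one_right.neg_right h
    · have hr : (2 ^ (n - 2) - 1 : ℤ) = 2 * (2 ^ (n - 3) - 1) + 1 := by
        rw [show n - 2 = n - 3 + 1 by omega]
        ring
      exact of_pair hr (isCoprime_two_pow_sub_one (by omega) _) h

end MaximalCyclic

theorem ncard_compl_of_index_eq_two {G : Type*} [Group G] [Finite G] {H : Subgroup G}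
    (hH : H.index = 2) : ((H : Set G)ᶜ).ncard = Nat.card H := by
  have hadd : (H : Set G).ncard + ((H : Set G)ᶜ).ncard = Nat.card G :=
    Set.ncard_add_ncard_compl _
  have hmul := H.card_mul_index
  have hcoe : (H : Set G).ncard = Nat.card H := rfl
  rw [hH] at hmul
  omega

theorem exists_notMem_and_notMem {G : Type*} [Group G] {H K : Subgroup G} (hH : H ≠ ⊤)
    (hK : K ≠ ⊤) : ∃ g, g ∉ H ∧ g ∉ K := by
  obtain ⟨x, hx⟩ : ∃ x, x ∉ H := by simpa [Subgroup.eq_top_iff'] using hH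
  obtain ⟨y, hy⟩ : ∃ y, y ∉ K := by simpa [Subgroup.eq_top_iff'] using hK
  by_cases hxK : x ∈ K
  · by_cases hyH : y ∈ H
    · exact ⟨x * y, by rwa [H.mul_mem_cancel_right hyH], by rwa [K.mul_mem_cancel_left hxK]⟩
    · exact ⟨y, hyH, hy⟩
  · exact ⟨x, hx, hxK⟩

theorem exists_ne_one_mem_center_of_normal {G : Type*} [Group G] {p : ℕ} [Fact p.Prime]
    [Finite G] (hG : IsPGroup p G) {N : Subgroup G} [N.Normal] (hN : N ≠ ⊥) :
    ∃ z ∈ N, z ≠ 1 ∧ z ∈ Subgroup.center G := by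
  have : Nontrivial N := (Subgroup.nontrivial_iff_ne_bot N).2 hN
  obtain ⟨m, hm0, hm⟩ := (hG.to_subgroup N).nontrivial_iff_card.1 this
  obtain ⟨z, hz, hz1⟩ :=
    (hG.of_equiv ConjAct.toConjAct).exists_fixed_point_of_prime_dvd_card_of_fixed_point N
      (hm ▸ dvd_pow_self p hm0.ne') (a := 1) fun g ↦ smul_one g
  refine ⟨z, z.2, fun h ↦ hz1 (Subtype.ext h.symm), Subgroup.mem_center_iff.2 fun g ↦ ?_⟩
  have hconj := congrArg Subtype.val (hz (ConjAct.toConjAct g))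
  rwa [ConjAct.Subgroup.val_conj_smul, ConjAct.toConjAct_smul, mul_inv_eq_iff_eq_mul] at hconj

section Scalars

open Module

variable {k G V : Type*} [Field k] [Group G] [AddCommGroup V] [Module k V]
  {ρ : Representation k G V} {a g : G}

theorem isIrreducible_iff_forall_submodule :
    ρ.IsIrreducible ↔ Nontrivial V ∧
      ∀ U : Submodule k V, (∀ g, ∀ v ∈ U, ρ g v ∈ U) → U = ⊥ ∨ U = ⊤ := by
  constructor
  · intro hρ
    refine ⟨?_, fun U hU ↦ ?_⟩
    · by_contra hV
      have := not_nontrivial_iff_subsingleton.1 hV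
      exact bot_ne_top (α := Subrepresentation ρ)
        (Subrepresentation.toSubmodule_injective (Subsingleton.elim _ _))
    · exact (hρ.eq_bot_or_eq_top ⟨U, hU⟩).imp (congrArg Subrepresentation.toSubmodule)
        (congrArg Subrepresentation.toSubmodule)
  · rintro ⟨hV, hU⟩
    exact
      { exists_pair_ne := ⟨⊥, ⊤, fun h ↦
          bot_ne_top (α := Submodule k V) (congrArg Subrepresentation.toSubmodule h)⟩
        eq_bot_or_eq_top := fun U ↦ (hU U.toSubmodule fun g v hv ↦ U.apply_mem_toSubmodule g hv).imp
          (fun h ↦ Subrepresentation.toSubmodule_injective h)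
          (fun h ↦ Subrepresentation.toSubmodule_injective h) }

theorem nontrivial_of_isIrreducible (hρ : ρ.IsIrreducible) : Nontrivial V :=
  (isIrreducible_iff_forall_submodule.1 hρ).1

theorem exists_eq_smul_one_of_commute [IsAlgClosed k] [FiniteDimensional k V]
    (hρ : ρ.IsIrreducible) {T : End k V} (hT : ∀ g, T * ρ g = ρ g * T) : ∃ c : k, T = c • 1 := by
  obtain ⟨c, hc⟩ :=
    Representation.IsIrreducible.algebraMap_intertwiningMap_bijective_of_isAlgClosed.2
      (⟨T, hT⟩ : Representation.IntertwiningMap ρ ρ)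
  exact ⟨c, (congrArg Representation.IntertwiningMap.toLinearMap hc).symm⟩

/-- The subgroup of elements acting as scalars, classically denoted `Z(χ)` where `χ` is the
character of `ρ`. -/
def scalarSubgroup (ρ : Representation k G V) : Subgroup G where
  carrier := {g | ∃ c : kˣ, ρ g = c • 1}
  mul_mem' := by
    rintro g h ⟨c, hc⟩ ⟨d, hd⟩
    exact ⟨c * d, by rw [map_mul, hc, hd, smul_mul_smul_comm, one_mul]⟩
  one_mem' := ⟨1, by rw [map_one, one_smul]⟩
  inv_mem' := by
    rintro g ⟨c, hc⟩
    refine ⟨c⁻¹, ?_⟩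
    rw [eq_inv_smul_iff, ← one_mul (ρ g⁻¹), ← smul_mul_assoc, ← hc, ← map_mul, mul_inv_cancel,
      map_one]

theorem mem_scalarSubgroup_iff [Nontrivial V] : g ∈ scalarSubgroup ρ ↔ ∃ c : k, ρ g = c • 1 := by
  refine ⟨fun ⟨c, hc⟩ ↦ ⟨c, hc⟩, fun ⟨c, hc⟩ ↦ ?_⟩
  have hc0 : c ≠ 0 := by
    rintro rfl
    have hzero := (ρ.asGroupHom g).ne_zero
    rw [ρ.asGroupHom_apply, hc, zero_smul] at hzero
    exact hzero rfl
  exact ⟨Units.mk0 c hc0, hc⟩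

instance scalarSubgroup_normal : (scalarSubgroup ρ).Normal where
  conj_mem := by
    rintro n ⟨c, hc⟩ g
    refine ⟨c, ?_⟩
    rw [map_mul, map_mul, hc, mul_smul_comm, mul_one, smul_mul_assoc, ← map_mul, mul_inv_cancel,
      map_one]

theorem scalarSubgroup_ne_top (hρ : ρ.IsIrreducible) (hdim : 1 < finrank k V) :
    scalarSubgroup ρ ≠ ⊤ := by
  intro htop
  obtain ⟨hV, hirr⟩ := isIrreducible_iff_forall_submodule.1 hρ
  obtain ⟨v, hv⟩ := exists_ne (0 : V)
  have hspan : finrank k (k ∙ v) = 1 := finrank_span_singleton hv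
  have hinvariant (g : G) (w : V) (hw : w ∈ k ∙ v) : ρ g w ∈ k ∙ v := by
    obtain ⟨c, hc⟩ : g ∈ scalarSubgroup ρ := htop ▸ Subgroup.mem_top g
    rw [hc]
    exact Submodule.smul_mem _ (c : k) hw
  rcases hirr (k ∙ v) hinvariant with h | h
  · rw [h, finrank_bot] at hspan
    omega
  · rw [h, finrank_top] at hspan
    omega

theorem mem_scalarSubgroup_of_commute [IsAlgClosed k] [FiniteDimensional k V]
    (hρ : ρ.IsIrreducible) (ha : ∀ g, ρ a * ρ g = ρ g * ρ a) : a ∈ scalarSubgroup ρ :=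
  have := nontrivial_of_isIrreducible hρ
  mem_scalarSubgroup_iff.2 (exists_eq_smul_one_of_commute hρ ha)

theorem center_le_scalarSubgroup [IsAlgClosed k] [FiniteDimensional k V] (hρ : ρ.IsIrreducible) :
    Subgroup.center G ≤ scalarSubgroup ρ := fun z hz ↦
  mem_scalarSubgroup_of_commute hρ fun g ↦ by
    rw [← map_mul, ← map_mul, Subgroup.mem_center_iff.1 hz g]

end Scalars

section Splitting

open Module
open scoped commutatorElement Pointwise

theorem exists_mul_self_mem_and_commutator_mem {G : Type*} [Group G] [Finite G]
    (hG : IsPGroup 2 G) {N : Subgroup G} [N.Normal] (hN : N ≠ ⊤) :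
    ∃ a : G, a ∉ N ∧ a * a ∈ N ∧ ∀ g : G, ⁅g, a⁆ ∈ N := by
  have hQ : IsPGroup 2 (G ⧸ N) := hG.to_quotient N
  have : Nontrivial (G ⧸ N) := QuotientGroup.nontrivial_iff.2 hN
  have hZ := hQ.center_nontrivial
  obtain ⟨m, hm0, hm⟩ := (hQ.to_subgroup _).nontrivial_iff_card.1 hZ
  obtain ⟨⟨q, hqZ⟩, hq⟩ := exists_prime_orderOf_dvd_card' 2 (hm ▸ dvd_pow_self 2 hm0.ne')
  rw [Subgroup.orderOf_mk] at hq
  obtain ⟨a, rfl⟩ := QuotientGroup.mk_surjective q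
  refine ⟨a, fun ha ↦ ?_, ?_, fun g ↦ ?_⟩
  · rw [(QuotientGroup.eq_one_iff a).2 ha, orderOf_one] at hq
    omega
  · rw [← QuotientGroup.eq_one_iff, ← pow_two, QuotientGroup.mk_pow, ← hq, pow_orderOf_eq_one]
  · rw [← QuotientGroup.eq_one_iff]
    exact commutatorElement_eq_one_iff_mul_comm.2 (Subgroup.mem_center_iff.1 hqZ g)

variable {k G V : Type*} [Field k] [Group G] [AddCommGroup V] [Module k V]
  {ρ : Representation k G V} {a b g h : G} {μ : k}

/-- The element `a` does not act as a scalar, squares to a scalar with square root `μ`, and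
commutes or anticommutes with the action of every element of the group. If `2 ≠ 0` in `k`, then `V`
is the direct sum of the eigenspaces of `ρ a` for `μ` and `-μ`, which every element of the group
either preserves or exchanges. -/
structure IsSplitting (ρ : Representation k G V) (a : G) (μ : k) : Prop where
  notMem : a ∉ scalarSubgroup ρ
  ne_zero : μ ≠ 0
  mul_self : ρ a * ρ a = (μ * μ) • 1
  commute_or (g : G) : ρ g * ρ a = ρ a * ρ g ∨ ρ g * ρ a = -(ρ a * ρ g)

theorem mul_self_eq_one_of_mul_eq_smul_mul [Nontrivial V] {c : k} (hμ : μ ≠ 0)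
    (ha : ρ a * ρ a = μ • 1) (hga : ρ g * ρ a = c • (ρ a * ρ g)) : c * c = 1 := by
  have hscaled : μ • ρ g = (c * c * μ) • ρ g :=
    calc μ • ρ g = ρ g * ρ a * ρ a := by rw [mul_assoc, ha, mul_smul_comm, mul_one]
      _ = c • (ρ a * (ρ g * ρ a)) := by
        rw [← mul_assoc (ρ a), ← smul_mul_assoc, ← hga]
      _ = (c * c) • (ρ a * ρ a * ρ g) := by rw [hga, mul_smul_comm, smul_smul, mul_assoc]
      _ = (c * c * μ) • ρ g := by rw [ha, smul_mul_assoc, one_mul, smul_smul]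
  have hg : ρ g ≠ 0 := (ρ.asGroupHom g).ne_zero
  exact mul_right_cancel₀ hμ ((one_mul μ).trans (smul_left_injective k hg hscaled)).symm

theorem exists_isSplitting [IsAlgClosed k] [Finite G] (hG : IsPGroup 2 G) (hρ : ρ.IsIrreducible)
    (hdim : 1 < finrank k V) : ∃ a μ, IsSplitting ρ a μ := by
  have := nontrivial_of_isIrreducible hρ
  obtain ⟨a, ha, ⟨s, hs⟩, hcomm⟩ :=
    exists_mul_self_mem_and_commutator_mem hG (scalarSubgroup_ne_top hρ hdim)
  obtain ⟨μ, hμ⟩ := IsAlgClosed.exists_eq_mul_self (s : k)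
  have hs' : ρ a * ρ a = (s : k) • 1 := (map_mul ρ a a).symm.trans hs
  refine ⟨a, μ, ha, fun h0 ↦ s.ne_zero (by rw [hμ, h0, mul_zero]), hμ ▸ hs', fun g ↦ ?_⟩
  obtain ⟨c, hc⟩ := hcomm g
  have hga : ρ g * ρ a = (c : k) • (ρ a * ρ g) :=
    calc ρ g * ρ a = ρ ⁅g, a⁆ * (ρ a * ρ g) := by
          rw [← map_mul, ← map_mul, ← map_mul, commutatorElement_def]
          congr 1
          group
      _ = (c : k) • (ρ a * ρ g) := by rw [hc, smul_mul_assoc, one_mul, Units.smul_def]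
  rcases mul_self_eq_one_iff.1 (mul_self_eq_one_of_mul_eq_smul_mul s.ne_zero hs' hga) with h | h
  · exact Or.inl (by rw [hga, h, one_smul])
  · exact Or.inr (by rw [hga, h, neg_one_smul])

/-- The subgroup of elements whose action commutes with that of `a`. -/
def commutingSubgroup (ρ : Representation k G V) (a : G) : Subgroup G :=
  (Subgroup.centralizer {ρ.asGroupHom a}).comap ρ.asGroupHom

theorem mem_commutingSubgroup_iff : g ∈ commutingSubgroup ρ a ↔ ρ g * ρ a = ρ a * ρ g := by
  simp only [commutingSubgroup, Subgroup.mem_comap, Subgroup.mem_centralizer_singleton_iff,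
    Units.ext_iff, Units.val_mul, Representation.asGroupHom_apply]

theorem scalarSubgroup_le_commutingSubgroup : scalarSubgroup ρ ≤ commutingSubgroup ρ a := by
  rintro g ⟨c, hc⟩
  rw [mem_commutingSubgroup_iff, hc, smul_mul_assoc, mul_smul_comm, one_mul, mul_one]

theorem character_eq_zero_of_anticommute [NeZero (2 : k)] (hgh : ρ g * ρ h = -(ρ h * ρ g)) :
    ρ.character g = 0 := by
  have hneg : ρ.character g = -ρ.character g :=
    calc ρ.character g = LinearMap.trace k V (ρ g * ρ h * ρ h⁻¹) := by
          rw [mul_assoc, ← map_mul ρ h, mul_inv_cancel, map_one, mul_one, Representation.character]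
      _ = -LinearMap.trace k V (ρ h * ρ g * ρ h⁻¹) := by rw [hgh, neg_mul, map_neg]
      _ = -ρ.character g := by
        rw [← map_mul, ← map_mul, ← Representation.character, Representation.char_conj]
  have htwo : 2 * ρ.character g = 0 := by linear_combination hneg
  exact (mul_eq_zero.1 htwo).resolve_left (NeZero.ne 2)

/-- The eigenspace of `ρ a` for `μ`, as a representation of the elements commuting with `a`. -/
def eigenSubrepresentation (ρ : Representation k G V) (a : G) (μ : k) :
    Subrepresentation (ρ.comp (commutingSubgroup ρ a).subtype) where
  toSubmodule := End.eigenspace (ρ a) μ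
  apply_mem_toSubmodule h v hv := by
    have hcomm : ρ h (ρ a v) = ρ a (ρ h v) :=
      LinearMap.congr_fun (mem_commutingSubgroup_iff.1 h.2) v
    rw [End.mem_eigenspace_iff] at hv ⊢
    exact hcomm.symm.trans (by rw [hv, map_smul]; rfl)

theorem forall_apply_mem_sup_map_of_index_eq_two {H : Subgroup G} (hH : H.index = 2) (hb : b ∉ H)
    {U : Submodule k V} (hU : ∀ g ∈ H, ∀ v ∈ U, ρ g v ∈ U) (g : G) :
    ∀ v ∈ U ⊔ U.map (ρ b), ρ g v ∈ U ⊔ U.map (ρ b) := by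
  have hcoset {g : G} (hg : g ∉ H) {v : V} (hv : v ∈ U) : ρ g v ∈ U.map (ρ b) := by
    refine ⟨ρ (b⁻¹ * g) v, hU _ ?_ v hv, ?_⟩
    · simp [Subgroup.mul_mem_iff_of_index_two hH, hg, hb]
    · rw [← End.mul_apply, ← map_mul, mul_inv_cancel_left]
  intro v hv
  obtain ⟨u, hu, _, ⟨w, hw, rfl⟩, rfl⟩ := Submodule.mem_sup.1 hv
  rw [map_add, ← End.mul_apply, ← map_mul]
  by_cases hg : g ∈ H
  · have hgb : g * b ∉ H := by simp [Subgroup.mul_mem_iff_of_index_two hH, hg, hb]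
    exact Submodule.add_mem_sup (hU g hg u hu) (hcoset hgb hw)
  · have hgb : g * b ∈ H := by simp [Subgroup.mul_mem_iff_of_index_two hH, hg, hb]
    rw [add_comm]
    exact Submodule.add_mem_sup (hU _ hgb w hw) (hcoset hg hu)

namespace IsSplitting

theorem neg (ha : IsSplitting ρ a μ) : IsSplitting ρ a (-μ) where
  notMem := ha.notMem
  ne_zero := neg_ne_zero.2 ha.ne_zero
  mul_self := by rw [neg_mul_neg, ha.mul_self]
  commute_or := ha.commute_or

theorem anticommute (ha : IsSplitting ρ a μ) (hg : g ∉ commutingSubgroup ρ a) :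
    ρ g * ρ a = -(ρ a * ρ g) :=
  (ha.commute_or g).resolve_left (mt mem_commutingSubgroup_iff.2 hg)

theorem character_eq_zero [NeZero (2 : k)] (ha : IsSplitting ρ a μ)
    (hg : g ∉ commutingSubgroup ρ a) : ρ.character g = 0 :=
  character_eq_zero_of_anticommute (ha.anticommute hg)

theorem apply_mem_eigenspace_neg (ha : IsSplitting ρ a μ) (hg : g ∉ commutingSubgroup ρ a) {ν : k}
    {v : V} (hv : v ∈ End.eigenspace (ρ a) ν) : ρ g v ∈ End.eigenspace (ρ a) (-ν) := by
  have hanti : ρ g (ρ a v) = -ρ a (ρ g v) := LinearMap.congr_fun (ha.anticommute hg) v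
  rw [End.mem_eigenspace_iff] at hv ⊢
  rw [neg_eq_iff_eq_neg.1 hanti.symm, hv, map_smul, neg_smul]

theorem isCompl_eigenspace [NeZero (2 : k)] (ha : IsSplitting ρ a μ) :
    IsCompl (End.eigenspace (ρ a) μ) (End.eigenspace (ρ a) (-μ)) := by
  have hμ := ha.ne_zero
  have htwo : (2 : k) ≠ 0 := NeZero.ne 2
  refine ⟨Submodule.disjoint_def.2 fun v hv hv' ↦ ?_, codisjoint_iff.2 (eq_top_iff.2 fun v _ ↦ ?_)⟩
  · rw [End.mem_eigenspace_iff] at hv hv'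
    rw [hv, ← sub_eq_zero, ← sub_smul, sub_neg_eq_add, ← two_mul, smul_eq_zero] at hv'
    exact hv'.resolve_left (mul_ne_zero htwo hμ)
  · have hsq : ρ a (ρ a v) = (μ * μ) • v := LinearMap.congr_fun ha.mul_self v
    refine Submodule.mem_sup.2 ⟨(2 : k)⁻¹ • (v + μ⁻¹ • ρ a v), ?_,
      (2 : k)⁻¹ • (v - μ⁻¹ • ρ a v), ?_, ?_⟩
    · rw [End.mem_eigenspace_iff]
      simp only [map_smul, map_add, hsq]
      match_scalars <;> field_simp
    · rw [End.mem_eigenspace_iff]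
      simp only [map_smul, map_sub, hsq]
      match_scalars <;> field_simp
    · match_scalars <;> field_simp <;> ring

theorem character_eq_add [NeZero (2 : k)] [FiniteDimensional k V] (ha : IsSplitting ρ a μ)
    (h : commutingSubgroup ρ a) :
    ρ.character h = (eigenSubrepresentation ρ a μ).toRepresentation.character h +
      (eigenSubrepresentation ρ a (-μ)).toRepresentation.character h := by
  let E (i : Bool) : Submodule k V := End.eigenspace (ρ a) (bif i then μ else -μ)
  have hE : DirectSum.IsInternal E :=
    (DirectSum.isInternal_submodule_iff_isCompl E (i := true) (j := false) (by decide)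
      (by ext i; cases i <;> simp)).2 ha.isCompl_eigenspace
  have hmaps (i : Bool) : Set.MapsTo (ρ h) (E i) (E i) := fun _ hv ↦
    (eigenSubrepresentation ρ a (bif i then μ else -μ)).apply_mem_toSubmodule h hv
  exact (LinearMap.trace_eq_sum_trace_restrict hE hmaps).trans (Fintype.sum_bool _)

section Irreducible

variable [IsAlgClosed k] [FiniteDimensional k V]

theorem exists_notMem_commutingSubgroup (ha : IsSplitting ρ a μ) (hρ : ρ.IsIrreducible) :
    ∃ b, b ∉ commutingSubgroup ρ a := by
  by_contra! h
  exact ha.notMem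
    (mem_scalarSubgroup_of_commute hρ fun g ↦ (mem_commutingSubgroup_iff.1 (h g)).symm)

theorem index_commutingSubgroup (ha : IsSplitting ρ a μ) (hρ : ρ.IsIrreducible) :
    (commutingSubgroup ρ a).index = 2 := by
  obtain ⟨b, hb⟩ := ha.exists_notMem_commutingSubgroup hρ
  refine Subgroup.index_eq_two_iff_exists_notMem_and.2 ⟨b, hb, fun g ↦ ?_⟩
  by_cases hg : g ∈ commutingSubgroup ρ a
  · exact Or.inr hg
  · left
    rw [mem_commutingSubgroup_iff, map_mul, mul_assoc, ha.anticommute hb, mul_neg, ← mul_assoc,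
      ha.anticommute hg, neg_mul, neg_neg, mul_assoc]

theorem character_self [NeZero (2 : k)] (ha : IsSplitting ρ a μ) (hρ : ρ.IsIrreducible) :
    ρ.character a = 0 := by
  obtain ⟨b, hb⟩ := ha.exists_notMem_commutingSubgroup hρ
  exact character_eq_zero_of_anticommute (h := b) (by rw [ha.anticommute hb, neg_neg])

theorem finrank_eigenspace_le (ha : IsSplitting ρ a μ) (hρ : ρ.IsIrreducible) (ν : k) :
    finrank k (End.eigenspace (ρ a) ν) ≤ finrank k (End.eigenspace (ρ a) (-ν)) := by
  obtain ⟨b, hb⟩ := ha.exists_notMem_commutingSubgroup hρ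
  refine LinearMap.finrank_le_finrank_of_injective
    (f := (ρ b).restrict fun v hv ↦ ha.apply_mem_eigenspace_neg hb hv) fun u v huv ↦ ?_
  exact Subtype.ext ((ρ.apply_bijective b).1 (congrArg Subtype.val huv))

variable [NeZero (2 : k)]

theorem two_mul_finrank_eigenspace (ha : IsSplitting ρ a μ) (hρ : ρ.IsIrreducible) :
    2 * finrank k (End.eigenspace (ρ a) μ) = finrank k V := by
  have hle := ha.finrank_eigenspace_le hρ μ
  have hge := ha.finrank_eigenspace_le hρ (-μ)
  have hadd := Submodule.finrank_add_eq_of_isCompl ha.isCompl_eigenspace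
  rw [neg_neg] at hge
  omega

theorem isIrreducible_eigenSubrepresentation (ha : IsSplitting ρ a μ) (hρ : ρ.IsIrreducible) :
    (eigenSubrepresentation ρ a μ).toRepresentation.IsIrreducible := by
  obtain ⟨hV, hirr⟩ := isIrreducible_iff_forall_submodule.1 hρ
  obtain ⟨b, hb⟩ := ha.exists_notMem_commutingSubgroup hρ
  refine isIrreducible_iff_forall_submodule.2 ⟨?_, fun U hU ↦ ?_⟩
  · have hhalf := ha.two_mul_finrank_eigenspace hρ
    have hpos : 0 < finrank k V := finrank_pos
    exact nontrivial_of_finrank_pos (R := k) (M := End.eigenspace (ρ a) μ) (by omega)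
  let U' : Submodule k V := U.map (End.eigenspace (ρ a) μ).subtype
  have hle : U' ≤ End.eigenspace (ρ a) μ := Submodule.map_subtype_le _ _
  have hU' : ∀ g ∈ commutingSubgroup ρ a, ∀ v ∈ U', ρ g v ∈ U' := by
    rintro g hg _ ⟨v, hv, rfl⟩
    exact ⟨_, hU ⟨g, hg⟩ v hv, rfl⟩
  have hinjective := Submodule.map_injective_of_injective (f := (End.eigenspace (ρ a) μ).subtype)
    Subtype.val_injective
  have hinvariant :=
    forall_apply_mem_sup_map_of_index_eq_two (ha.index_commutingSubgroup hρ) hb hU'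
  rcases hirr _ hinvariant with hbot | htop
  · exact Or.inl (hinjective ((sup_eq_bot_iff.1 hbot).1.trans (Submodule.map_bot _).symm))
  · have hmap : U'.map (ρ b) ≤ End.eigenspace (ρ a) (-μ) :=
      Submodule.map_le_iff_le_comap.2 fun v hv ↦ ha.apply_mem_eigenspace_neg hb (hle hv)
    have hU'_eq : U' = End.eigenspace (ρ a) μ :=
      eq_of_le_of_inf_le_of_le_sup hle (ha.isCompl_eigenspace.disjoint.le_bot.trans bot_le)
        (le_top.trans (htop.ge.trans (sup_le_sup_left hmap _)))
    exact Or.inr (hinjective (hU'_eq.trans (Submodule.map_subtype_top _).symm))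

end Irreducible

theorem mem_scalarSubgroup_eigenSubrepresentation (ha : IsSplitting ρ a μ)
    {h : commutingSubgroup ρ a} (hh : a⁻¹ * (h : G) ∈ scalarSubgroup ρ) :
    h ∈ scalarSubgroup (eigenSubrepresentation ρ a μ).toRepresentation := by
  obtain ⟨c, hc⟩ := hh
  refine ⟨c * Units.mk0 μ ha.ne_zero, LinearMap.ext fun v ↦ Subtype.ext ?_⟩
  calc ρ h v = ρ a (ρ (a⁻¹ * h) v) := by rw [← End.mul_apply, ← map_mul, mul_inv_cancel_left]
    _ = (c : k) • ρ a v := by rw [hc, ← map_smul]; rfl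
    _ = ((c : k) * μ) • (v : V) := by rw [End.mem_eigenspace_iff.1 v.2, smul_smul]

theorem exists_eq_smul_one_add_smul [FiniteDimensional k V] (ha : IsSplitting ρ a μ)
    (hdim : finrank k V = 2) (hh : h ∈ commutingSubgroup ρ a) :
    ∃ α β : k, ρ h = α • 1 + β • ρ a := by
  obtain ⟨v, hv⟩ : ∃ v, LinearIndependent k ![v, ρ a v] := by
    by_contra! hdependent
    have := nontrivial_of_finrank_pos (R := k) (M := V) (by omega)
    exact ha.notMem (mem_scalarSubgroup_iff.2
      (LinearMap.exists_eq_smul_id_of_forall_notLinearIndependent hdependent))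
  let e := basisOfLinearIndependentOfCardEqFinrank hv (by simp [hdim])
  have he0 : e 0 = v := by simp [e]
  have he1 : e 1 = ρ a v := by simp [e]
  have hhv : ρ h v = e.repr (ρ h v) 0 • v + e.repr (ρ h v) 1 • ρ a v := by
    conv_lhs => rw [← e.sum_repr (ρ h v), Fin.sum_univ_two, he0, he1]
  have hcomm : ρ h (ρ a v) = ρ a (ρ h v) := LinearMap.congr_fun (mem_commutingSubgroup_iff.1 hh) v
  refine ⟨e.repr (ρ h v) 0, e.repr (ρ h v) 1, e.ext fun i ↦ ?_⟩
  fin_cases i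
  · simpa [he0] using hhv
  · simp only [Fin.mk_one, he1, hcomm, LinearMap.add_apply, LinearMap.smul_apply, End.one_apply]
    conv_lhs => rw [hhv, map_add, map_smul, map_smul]

theorem commute_of_mem_commutingSubgroup [FiniteDimensional k V] (ha : IsSplitting ρ a μ)
    (hdim : finrank k V = 2) (hg : g ∈ commutingSubgroup ρ a) (hh : h ∈ commutingSubgroup ρ a) :
    Commute (ρ g) (ρ h) := by
  obtain ⟨α, β, hαβ⟩ := ha.exists_eq_smul_one_add_smul hdim hh
  rw [hαβ]
  exact ((Commute.one_right _).smul_right α).add_right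
    (Commute.smul_right (mem_commutingSubgroup_iff.1 hg) β)

section Zeros

variable [IsAlgClosed k] [FiniteDimensional k V]

theorem ncard_compl_union_smul [Finite G] (ha : IsSplitting ρ a μ) (hρ : ρ.IsIrreducible) :
    ((commutingSubgroup ρ a : Set G)ᶜ ∪ a • (scalarSubgroup ρ : Set G)).ncard =
      Nat.card (commutingSubgroup ρ a) + Nat.card (scalarSubgroup ρ) := by
  have hdisjoint : Disjoint (commutingSubgroup ρ a : Set G)ᶜ (a • (scalarSubgroup ρ : Set G)) := by
    rw [Set.disjoint_compl_left_iff_subset]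
    rintro _ ⟨z, hz, rfl⟩
    exact mul_mem (mem_commutingSubgroup_iff.2 rfl) (scalarSubgroup_le_commutingSubgroup hz)
  rw [Set.ncard_union_eq hdisjoint, ncard_compl_of_index_eq_two (ha.index_commutingSubgroup hρ),
    Set.ncard_smul_set]
  rfl

variable [NeZero (2 : k)]

theorem character_eq_zero_of_inv_mul_mem (ha : IsSplitting ρ a μ) (hρ : ρ.IsIrreducible)
    (hg : a⁻¹ * g ∈ scalarSubgroup ρ) : ρ.character g = 0 := by
  obtain ⟨c, hc⟩ := hg
  have hsmul : ρ g = (c : k) • ρ a := by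
    rw [← mul_inv_cancel_left a g, map_mul, hc, Units.smul_def, mul_smul_comm, mul_one]
  have hself : LinearMap.trace k V (ρ a) = 0 := ha.character_self hρ
  rw [Representation.character, hsmul, map_smul, hself, smul_zero]

theorem compl_union_smul_subset_zeros (ha : IsSplitting ρ a μ) (hρ : ρ.IsIrreducible) :
    (commutingSubgroup ρ a : Set G)ᶜ ∪ a • (scalarSubgroup ρ : Set G) ⊆
      {g | ρ.character g = 0} := by
  rintro g (hg | hg)
  · exact ha.character_eq_zero hg
  · exact ha.character_eq_zero_of_inv_mul_mem hρ (Set.mem_smul_set_iff_inv_smul_mem.1 hg)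

theorem zeros_eq_compl_union_smul (ha : IsSplitting ρ a μ) (hρ : ρ.IsIrreducible)
    (hdim : finrank k V = 2) :
    {g | ρ.character g = 0} =
      (commutingSubgroup ρ a : Set G)ᶜ ∪ a • (scalarSubgroup ρ : Set G) := by
  refine (ha.compl_union_smul_subset_zeros hρ).antisymm' fun g hg ↦ ?_
  refine or_iff_not_imp_left.2 fun hmem ↦ Set.mem_smul_set_iff_inv_smul_mem.2 ?_
  have := nontrivial_of_isIrreducible hρ
  have hself : LinearMap.trace k V (ρ a) = 0 := ha.character_self hρ
  obtain ⟨α, β, hαβ⟩ := ha.exists_eq_smul_one_add_smul hdim (not_not.1 hmem)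
  have hα : α = 0 := by
    have htrace : LinearMap.trace k V (ρ g) = 0 := hg
    rw [hαβ, map_add, map_smul, map_smul, hself, LinearMap.trace_one, hdim, smul_zero, add_zero,
      smul_eq_mul, Nat.cast_two] at htrace
    exact (mul_eq_zero.1 htrace).resolve_right (NeZero.ne 2)
  refine mem_scalarSubgroup_iff.2 ⟨β, ?_⟩
  rw [smul_eq_mul, map_mul, hαβ, hα, zero_smul, zero_add, mul_smul_comm, ← map_mul, inv_mul_cancel,
    map_one]

theorem exists_character_eigenSubrepresentation_eq_zero [Finite G] (hG : IsPGroup 2 G)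
    (ha : IsSplitting ρ a μ) (hρ : ρ.IsIrreducible) (hdim : 2 < finrank k V) :
    ∃ L : Subgroup (commutingSubgroup ρ a), L ≠ ⊤ ∧
      (∀ h : commutingSubgroup ρ a, a⁻¹ * (h : G) ∈ scalarSubgroup ρ → h ∈ L) ∧
      ∀ h ∉ L, (eigenSubrepresentation ρ a μ).toRepresentation.character h = 0 := by
  have hhalf := ha.two_mul_finrank_eigenspace hρ
  have hirr := ha.isIrreducible_eigenSubrepresentation hρ
  have : FiniteDimensional k (eigenSubrepresentation ρ a μ).toSubmodule :=
    inferInstanceAs (FiniteDimensional k (End.eigenspace (ρ a) μ))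
  obtain ⟨a', μ', ha'⟩ := exists_isSplitting (hG.to_subgroup (commutingSubgroup ρ a)) hirr
    (show 1 < finrank k (End.eigenspace (ρ a) μ) by omega)
  refine ⟨_, fun htop ↦ ?_, fun h hh ↦ scalarSubgroup_le_commutingSubgroup (a := a')
    (ha.mem_scalarSubgroup_eigenSubrepresentation hh), fun h ↦ ha'.character_eq_zero⟩
  have hindex := ha'.index_commutingSubgroup hirr
  rw [htop, Subgroup.index_top] at hindex
  omega

theorem compl_union_smul_ssubset_zeros [Finite G] (hG : IsPGroup 2 G) (ha : IsSplitting ρ a μ)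
    (hρ : ρ.IsIrreducible) (hdim : 2 < finrank k V) :
    (commutingSubgroup ρ a : Set G)ᶜ ∪ a • (scalarSubgroup ρ : Set G) ⊂
      {g | ρ.character g = 0} := by
  obtain ⟨L, hL, hscalar, hzero⟩ :=
    ha.exists_character_eigenSubrepresentation_eq_zero hG hρ hdim
  obtain ⟨L', hL', -, hzero'⟩ :=
    ha.neg.exists_character_eigenSubrepresentation_eq_zero hG hρ hdim
  obtain ⟨h, hhL, hhL'⟩ := exists_notMem_and_notMem hL hL'
  refine (ha.compl_union_smul_subset_zeros hρ).ssubset_of_mem_notMem (a := (h : G)) ?_ ?_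
  · rw [Set.mem_ofPred_eq, ha.character_eq_add h, hzero h hhL, hzero' h hhL', add_zero]
  · rintro (hh | hh)
    · exact hh h.2
    · exact hhL (hscalar h (Set.mem_smul_set_iff_inv_smul_mem.1 hh))

end Zeros

end IsSplitting

section ZeroCount

variable [IsAlgClosed k] [FiniteDimensional k V] {n : ℕ}

theorem two_le_card_scalarSubgroup [Finite G] (hG : IsPGroup 2 G) (hρ : ρ.IsIrreducible)
    (hdim : 1 < finrank k V) : 2 ≤ Nat.card (scalarSubgroup ρ) := by
  have : Nontrivial G :=
    Subgroup.nontrivial_iff.1 (nontrivial_of_ne _ _ (scalarSubgroup_ne_top hρ hdim))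
  have := hG.center_nontrivial
  exact Finite.one_lt_card.trans_le (Subgroup.card_le_of_le (center_le_scalarSubgroup hρ))

theorem IsSplitting.card_commutingSubgroup (ha : IsSplitting ρ a μ) (hρ : ρ.IsIrreducible)
    (hG : Nat.card G = 2 ^ n) : Nat.card (commutingSubgroup ρ a) = 2 ^ (n - 1) := by
  have hmul := (commutingSubgroup ρ a).card_mul_index
  rw [ha.index_commutingSubgroup hρ, hG] at hmul
  cases n with
  | zero => omega
  | succ m =>
    rw [pow_succ] at hmul
    exact Nat.eq_of_mul_eq_mul_right two_pos hmul

variable [NeZero (2 : k)] [Finite G]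

theorem two_pow_add_card_scalarSubgroup_le_ncard_zeros (hG : Nat.card G = 2 ^ n)
    (hρ : ρ.IsIrreducible) (hdim : 1 < finrank k V) :
    2 ^ (n - 1) + Nat.card (scalarSubgroup ρ) ≤ {g | ρ.character g = 0}.ncard := by
  obtain ⟨a, μ, ha⟩ := exists_isSplitting (.of_card hG) hρ hdim
  rw [← ha.card_commutingSubgroup hρ hG, ← ha.ncard_compl_union_smul hρ]
  exact Set.ncard_le_ncard (ha.compl_union_smul_subset_zeros hρ)

theorem two_pow_add_card_scalarSubgroup_eq_ncard_zeros_iff (hG : Nat.card G = 2 ^ n)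
    (hρ : ρ.IsIrreducible) (hdim : 1 < finrank k V) :
    2 ^ (n - 1) + Nat.card (scalarSubgroup ρ) = {g | ρ.character g = 0}.ncard ↔
      finrank k V = 2 := by
  have hp : IsPGroup 2 G := IsPGroup.of_card hG
  obtain ⟨a, μ, ha⟩ := exists_isSplitting hp hρ hdim
  rw [← ha.card_commutingSubgroup hρ hG, ← ha.ncard_compl_union_smul hρ]
  refine ⟨fun heq ↦ ?_, fun hdim ↦ by rw [ha.zeros_eq_compl_union_smul hρ hdim]⟩
  by_contra hne
  exact (Set.ncard_lt_ncard (ha.compl_union_smul_ssubset_zeros hp hρ (by omega))).ne heq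

theorem two_pow_add_two_le_ncard_zeros (hG : Nat.card G = 2 ^ n) (hρ : ρ.IsIrreducible)
    (hdim : 1 < finrank k V) : 2 ^ (n - 1) + 2 ≤ {g | ρ.character g = 0}.ncard :=
  (Nat.add_le_add_left (two_le_card_scalarSubgroup (.of_card hG) hρ hdim) _).trans
    (two_pow_add_card_scalarSubgroup_le_ncard_zeros hG hρ hdim)

theorem ncard_zeros_eq_two_pow_add_two_iff (hG : Nat.card G = 2 ^ n) (hρ : ρ.IsIrreducible)
    (hdim : 1 < finrank k V) :
    {g | ρ.character g = 0}.ncard = 2 ^ (n - 1) + 2 ↔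
      finrank k V = 2 ∧ Nat.card (scalarSubgroup ρ) = 2 := by
  have htwo := two_le_card_scalarSubgroup (.of_card hG) hρ hdim
  have hle := two_pow_add_card_scalarSubgroup_le_ncard_zeros hG hρ hdim
  rw [← two_pow_add_card_scalarSubgroup_eq_ncard_zeros_iff hG hρ hdim]
  omega

end ZeroCount

end Splitting

section Faithful

open Module
open scoped commutatorElement

variable {k G V : Type*} [Field k] [IsAlgClosed k] [Group G] [AddCommGroup V] [Module k V]
  [FiniteDimensional k V] {ρ : Representation k G V} {a : G} {μ : k}

theorem scalarSubgroup_eq_center_of_injective (hρ : ρ.IsIrreducible)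
    (hinj : Function.Injective ρ) : scalarSubgroup ρ = Subgroup.center G := by
  refine le_antisymm (fun z ⟨c, hc⟩ ↦ Subgroup.mem_center_iff.2 fun g ↦ hinj ?_)
    (center_le_scalarSubgroup hρ)
  rw [map_mul, map_mul, hc, mul_smul_comm, smul_mul_assoc, one_mul, mul_one]

theorem IsSplitting.injective_of_card_scalarSubgroup_eq_two (ha : IsSplitting ρ a μ)
    (hρ : ρ.IsIrreducible) (hcard : Nat.card (scalarSubgroup ρ) = 2) : Function.Injective ρ := by
  obtain ⟨b, hb⟩ := ha.exists_notMem_commutingSubgroup hρ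
  have hba : ρ b * ρ a = ρ ⁅b, a⁆ * (ρ a * ρ b) := by
    rw [← map_mul, ← map_mul, ← map_mul, commutatorElement_def]
    congr 1
    group
  have hne : ρ ⁅b, a⁆ ≠ 1 := fun h ↦ hb (mem_commutingSubgroup_iff.2 (by rw [hba, h, one_mul]))
  have hmem : ⁅b, a⁆ ∈ scalarSubgroup ρ := by
    refine ⟨-1, ?_⟩
    rw [commutatorElement_def, map_mul, map_mul, map_mul, ha.anticommute hb, ← map_mul, neg_mul,
      neg_mul, ← map_mul, ← map_mul, mul_inv_cancel_right, mul_inv_cancel, map_one,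
      Units.smul_def, Units.val_neg, Units.val_one, neg_one_smul]
  obtain ⟨z, -, hz⟩ := exists_ne_one_mem_iff_of_card_eq_two hcard
  have hbaz : ⁅b, a⁆ = z := ((hz _).1 hmem).resolve_left fun h ↦ hne (by rw [h, map_one])
  refine (injective_iff_map_eq_one ρ).2 fun g hg ↦ ?_
  exact ((hz g).1 ⟨1, by rw [hg, one_smul]⟩).resolve_right fun hgz ↦ hne (by rw [hbaz, ← hgz, hg])

theorem card_center_eq_two_and_exists_isMulCommutative [Finite G] (hG : IsPGroup 2 G)
    (hρ : ρ.IsIrreducible) (hdim : finrank k V = 2)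
    (hcard : Nat.card (scalarSubgroup ρ) = 2) :
    Nat.card (Subgroup.center G) = 2 ∧ ∃ H : Subgroup G, IsMulCommutative H ∧ H.index = 2 := by
  obtain ⟨a, μ, ha⟩ := exists_isSplitting hG hρ (by omega)
  have hinj := ha.injective_of_card_scalarSubgroup_eq_two hρ hcard
  refine ⟨by rw [← scalarSubgroup_eq_center_of_injective hρ hinj, hcard],
    commutingSubgroup ρ a, ⟨⟨fun g h ↦ Subtype.ext (hinj ?_)⟩⟩, ha.index_commutingSubgroup hρ⟩
  rw [Subgroup.coe_mul, Subgroup.coe_mul, map_mul, map_mul]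
  exact ha.commute_of_mem_commutingSubgroup hdim g.2 h.2

end Faithful

section Existence

open Module

theorem injective_of_apply_center_ne_one {k G V : Type*} [Field k] [Group G] [AddCommGroup V]
    [Module k V] {ρ : Representation k G V} [Finite G] (hG : IsPGroup 2 G)
    (hcard : Nat.card (Subgroup.center G) = 2) {z : G} (hz : z ∈ Subgroup.center G)
    (hρz : ρ z ≠ 1) : Function.Injective ρ := by
  obtain ⟨w, -, hw⟩ := exists_ne_one_mem_iff_of_card_eq_two hcard
  have hzw : z = w := ((hw z).1 hz).resolve_left fun h ↦ hρz (by rw [h, map_one])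
  by_contra hinjective
  have hker : ρ.ker ≠ ⊥ := fun h ↦ hinjective ((MonoidHom.ker_eq_bot_iff _).1 h)
  obtain ⟨y, hy, hy1, hycenter⟩ := exists_ne_one_mem_center_of_normal hG hker
  have hyw : y = w := ((hw y).1 hycenter).resolve_left hy1
  exact hρz (by rw [hzw, ← hyw]; exact hy)

theorem neg_one_ne_one_of_nontrivial {k V : Type*} [Field k] [NeZero (2 : k)] [AddCommGroup V]
    [Module k V] [Nontrivial V] : (-1 : End k V) ≠ 1 := by
  obtain ⟨v, hv⟩ := exists_ne (0 : V)
  intro h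
  have hneg : -v = v := LinearMap.congr_fun h v
  have htwo : (2 : k) • v = 0 := by rw [two_smul, ← neg_eq_iff_add_eq_zero, hneg]
  exact smul_ne_zero (NeZero.ne 2) hv htwo

theorem exists_subrepresentation_le_isIrreducible {k G V : Type*} [Field k] [Group G]
    [AddCommGroup V] [Module k V] [FiniteDimensional k V] {ρ : Representation k G V}
    {U : Subrepresentation ρ} (hU : U.toSubmodule ≠ ⊥) :
    ∃ W : Subrepresentation ρ, W.toSubmodule ≤ U.toSubmodule ∧
      W.toRepresentation.IsIrreducible := by
  obtain ⟨W, ⟨hWU, hW0, hW⟩, hmin⟩ := WellFounded.has_min (wellFounded_lt (α := Submodule k V))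
    {W | W ≤ U.toSubmodule ∧ W ≠ ⊥ ∧ ∀ g, ∀ v ∈ W, ρ g v ∈ W}
    ⟨U.toSubmodule, le_rfl, hU, fun g v hv ↦ U.apply_mem_toSubmodule g hv⟩
  refine ⟨⟨W, fun g v hv ↦ hW g v hv⟩, hWU, isIrreducible_iff_forall_submodule.2
    ⟨Submodule.nontrivial_iff_ne_bot.2 hW0, fun X hX ↦ ?_⟩⟩
  have hinjective := Submodule.map_injective_of_injective (f := W.subtype) Subtype.val_injective
  have hle : X.map W.subtype ≤ W := Submodule.map_subtype_le W X
  by_cases hX0 : X.map W.subtype = ⊥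
  · exact Or.inl (hinjective (hX0.trans (Submodule.map_bot _).symm))
  have hXinvariant (g : G) : ∀ v ∈ X.map W.subtype, ρ g v ∈ X.map W.subtype := by
    rintro _ ⟨v, hv, rfl⟩
    exact ⟨_, hX g v hv, rfl⟩
  have heq : X.map W.subtype = W :=
    eq_of_le_of_not_lt hle (hmin _ ⟨hle.trans hWU, hX0, hXinvariant⟩)
  exact Or.inr (hinjective (heq.trans (Submodule.map_subtype_top W).symm))

variable {k G V : Type*} [Field k] [IsAlgClosed k] [Group G] [AddCommGroup V] [Module k V]
  [FiniteDimensional k V] {ρ : Representation k G V}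

theorem exists_forall_apply_eq_smul [IsMulCommutative G] [Nontrivial V]
    (ρ : Representation k G V) : ∃ v ≠ 0, ∀ g, ∃ c : k, ρ g v = c • v := by
  obtain ⟨W, -, hW⟩ :=
    exists_subrepresentation_le_isIrreducible (ρ := ρ) (U := ⊤) top_ne_bot
  have hdim : finrank k W.toSubmodule = 1 :=
    Representation.IsIrreducible.finrank_eq_one_of_isMulCommutative W.toRepresentation
  obtain ⟨v, hv, hspan⟩ := finrank_eq_one_iff'.1 hdim
  refine ⟨v, Subtype.coe_ne_coe.2 hv, fun g ↦ ?_⟩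
  obtain ⟨c, hc⟩ := hspan (W.toRepresentation g v)
  exact ⟨c, (congrArg Subtype.val hc).symm⟩

-- The translates of a common eigenvector of `H` by coset representatives span `V`.
theorem finrank_le_index_of_isMulCommutative (hρ : ρ.IsIrreducible) (H : Subgroup G)
    [IsMulCommutative H] [H.FiniteIndex] : finrank k V ≤ H.index := by
  obtain ⟨hV, hirr⟩ := isIrreducible_iff_forall_submodule.1 hρ
  obtain ⟨v, hv, hvH⟩ := exists_forall_apply_eq_smul (ρ.comp H.subtype)
  let U := Submodule.span k (Set.range fun q : G ⧸ H ↦ ρ q.out v)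
  have hmem (g : G) : ρ g v ∈ U := by
    obtain ⟨h, hh⟩ := QuotientGroup.mk_out_eq_mul H g
    obtain ⟨c, hc⟩ := hvH h⁻¹
    have hg : ρ g v = c • ρ (g : G ⧸ H).out v :=
      calc ρ g v = ρ ((g : G ⧸ H).out * (h⁻¹ : H)) v := by rw [hh]; simp
        _ = ρ (g : G ⧸ H).out (c • v) := by rw [← hc, map_mul]; rfl
        _ = c • ρ (g : G ⧸ H).out v := map_smul _ _ _
    exact hg ▸ U.smul_mem c (Submodule.subset_span ⟨g, rfl⟩)
  have hinvariant (g : G) : ∀ w ∈ U, ρ g w ∈ U := by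
    suffices U ≤ U.comap (ρ g) from this
    rw [Submodule.span_le]
    rintro _ ⟨q, rfl⟩
    simp only [Submodule.comap_coe, Set.mem_preimage, SetLike.mem_coe, ← End.mul_apply, ← map_mul]
    exact hmem _
  have hbot : U ≠ ⊥ := fun h ↦ hv ((Submodule.mem_bot k).1 (h ▸ by simpa using hmem 1))
  have htop : U = ⊤ := (hirr U hinvariant).resolve_left hbot
  have := H.fintypeQuotientOfFiniteIndex
  rw [← finrank_top, ← htop, Subgroup.index_eq_card, Nat.card_eq_fintype_card]
  exact finrank_range_le_card _

universe u v

theorem exists_isIrreducible_apply_eq_neg_one (k : Type u) [Field k] {G : Type v} [Group G]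
    [Finite G] {z : G} (hz : z ∈ Subgroup.center G) (hzz : z * z = 1) (hz1 : z ≠ 1) :
    ∃ (V : Type u) (_ : AddCommGroup V) (_ : Module k V) (_ : FiniteDimensional k V)
      (ρ : Representation k G V), ρ.IsIrreducible ∧ ρ z = -1 := by
  let ρ := Representation.ofMulAction k G (Shrink.{u} G)
  have : Finite (Shrink.{u} G) := Finite.of_equiv G (equivShrink.{u} G)
  let U : Subrepresentation ρ :=
    { toSubmodule := End.eigenspace (ρ z) (-1)
      apply_mem_toSubmodule := fun g v hv ↦ by
        rw [End.mem_eigenspace_iff] at hv ⊢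
        rw [← End.mul_apply, ← map_mul, ← Subgroup.mem_center_iff.1 hz, map_mul, End.mul_apply, hv,
          map_smul] }
  have hU : U.toSubmodule ≠ ⊥ := by
    let e : Shrink.{u} G := equivShrink.{u} G 1
    refine (Submodule.ne_bot_iff _).2 ⟨.single e 1 - .single (z • e) 1, ?_, fun h0 ↦ hz1 ?_⟩
    · refine End.mem_eigenspace_iff.2 ?_
      simp only [ρ, map_sub, Representation.ofMulAction_single, smul_smul, hzz, one_smul, neg_smul,
        neg_sub]
    · rw [sub_eq_zero, MonoidAlgebra.single_left_inj one_ne_zero] at h0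
      simpa [e] using (congrArg (equivShrink.{u} G).symm h0).symm
  obtain ⟨W, hWU, hW⟩ := exists_subrepresentation_le_isIrreducible hU
  refine ⟨W.toSubmodule, inferInstance, inferInstance, inferInstance, W.toRepresentation, hW,
    LinearMap.ext fun v ↦ Subtype.ext ?_⟩
  exact (End.mem_eigenspace_iff.1 (hWU v.2)).trans (neg_one_smul k _)

theorem exists_isIrreducible_finrank_eq_two_and_card_scalarSubgroup_eq_two (k : Type u) [Field k]
    [IsAlgClosed k] [NeZero (2 : k)] {G : Type v} [Group G] [Finite G] (hG : IsPGroup 2 G)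
    (hcenter : Subgroup.center G ≠ ⊤) (hcard : Nat.card (Subgroup.center G) = 2)
    (H : Subgroup G) [IsMulCommutative H] (hH : H.index = 2) :
    ∃ (V : Type u) (_ : AddCommGroup V) (_ : Module k V) (_ : FiniteDimensional k V)
      (ρ : Representation k G V), ρ.IsIrreducible ∧ finrank k V = 2 ∧
        Nat.card (scalarSubgroup ρ) = 2 := by
  obtain ⟨z, hz1, hz⟩ := exists_ne_one_mem_iff_of_card_eq_two hcard
  have hzcenter : z ∈ Subgroup.center G := (hz z).2 (Or.inr rfl)
  obtain ⟨V, _, _, _, ρ, hρ, hρz⟩ := exists_isIrreducible_apply_eq_neg_one k hzcenter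
    (mul_self_eq_one_of_card_eq_two hcard hzcenter) hz1
  have hV := nontrivial_of_isIrreducible hρ
  have hne : ρ z ≠ 1 := hρz ▸ neg_one_ne_one_of_nontrivial
  have hscalar := scalarSubgroup_eq_center_of_injective hρ
    (injective_of_apply_center_ne_one hG hcard hzcenter hne)
  have hone : finrank k V ≠ 1 := fun h ↦ hcenter <| by
    rw [← hscalar, Subgroup.eq_top_iff']
    exact fun g ↦ mem_scalarSubgroup_iff.2
      (LinearMap.existsUnique_eq_smul_id_of_finrank_eq_one h (ρ g)).exists
  have : H.FiniteIndex := ⟨by omega⟩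
  have hle := finrank_le_index_of_isMulCommutative hρ H
  have hpos : 0 < finrank k V := finrank_pos
  exact ⟨V, _, _, inferInstance, ρ, hρ, by omega, by rw [hscalar, hcard]⟩

end Existence

section Simple

open Module

universe u v

variable {k : Type u} {G : Type v} [Field k] [Group G] {V W : FDRep k G}

theorem isIrreducible_of_simple [Simple V] : Representation.IsIrreducible V.ρ := by
  refine isIrreducible_iff_forall_submodule.2 ⟨?_, fun U hU ↦ ?_⟩
  · by_contra hV
    have := not_nontrivial_iff_subsingleton.1 hV
    refine id_nonzero V ?_
    ext v
    exact Subsingleton.elim (α := V) _ _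
  let inclusion : FDRep.of (Subrepresentation.toRepresentation (ρ := V.ρ) ⟨U, hU⟩) ⟶ V :=
    ⟨FGModuleCat.ofHom U.subtype, fun g ↦ by ext; rfl⟩
  have hmono : Mono inclusion := by
    refine ⟨fun p q hpq ↦ ?_⟩
    ext z
    exact congrArg (fun φ ↦ φ.hom.hom.hom z) hpq
  by_cases hzero : inclusion = 0
  · exact Or.inl ((Submodule.eq_bot_iff U).2 fun u hu ↦
      congrArg (fun φ ↦ φ.hom.hom.hom (⟨u, hu⟩ : U)) hzero)
  · have : IsIso inclusion := isIso_of_mono_of_nonzero hzero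
    refine Or.inr (eq_top_iff.2 fun v _ ↦ ?_)
    have hv : (((inv inclusion).hom.hom.hom v : U) : V) = v :=
      congrArg (fun φ ↦ φ.hom.hom.hom v) (IsIso.inv_hom_id inclusion)
    exact hv ▸ Subtype.property _

theorem injective_of_mono (f : W ⟶ V) [Mono f] : Function.Injective f.hom.hom.hom := by
  have : Mono f.hom := inferInstanceAs (Mono ((Action.forget (FGModuleCat k) G).map f))
  have : Mono ((forget₂ (FGModuleCat k) (ModuleCat k)).map f.hom) := inferInstance
  exact (ModuleCat.mono_iff_injective _).1 this

theorem isIso_of_bijective (f : W ⟶ V) (hf : Function.Bijective f.hom.hom.hom) : IsIso f := by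
  let e : W ≃ₗ[k] V := LinearEquiv.ofBijective f.hom.hom.hom hf
  have : IsIso f.hom := inferInstanceAs (IsIso e.toFGModuleCatIso.hom)
  exact Action.isIso_of_hom_isIso f

theorem simple_of_isIrreducible (hV : Representation.IsIrreducible V.ρ) : Simple V := by
  obtain ⟨hnontrivial, hirr⟩ := isIrreducible_iff_forall_submodule.1 hV
  refine ⟨fun {W} f _ ↦ ⟨fun hiso hzero ↦ ?_, fun hne ↦ ?_⟩⟩
  · obtain ⟨v, hv⟩ := exists_ne (0 : V)
    subst hzero
    have hid : 𝟙 V = 0 := (IsIso.inv_hom_id (0 : W ⟶ V)).symm.trans Limits.comp_zero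
    exact hv (congrArg (fun φ ↦ φ.hom.hom.hom v) hid)
  · have hinvariant (g : G) : ∀ v ∈ LinearMap.range f.hom.hom.hom,
        V.ρ g v ∈ LinearMap.range f.hom.hom.hom := by
      rintro _ ⟨w, rfl⟩
      exact ⟨W.ρ g w, congrArg (fun φ ↦ φ.hom.hom w) (f.comm g)⟩
    have hbot : LinearMap.range f.hom.hom.hom ≠ ⊥ := fun h ↦ hne <| by
      ext w
      exact (Submodule.eq_bot_iff _).1 h _ ⟨w, rfl⟩
    have htop := (hirr _ hinvariant).resolve_left hbot
    exact isIso_of_bijective f ⟨injective_of_mono f, LinearMap.range_eq_top.1 htop⟩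

end Simple

theorem exists_simple_ncard_zeros_eq_iff {k G : Type*} [Field k] [IsAlgClosed k] [NeZero (2 : k)]
    [Group G] [Finite G] {n : ℕ} (hn : 2 ≤ n) (hG : Nat.card G = 2 ^ n) :
    (∃ V : FDRep k G, Simple V ∧ 1 < Module.finrank k V ∧
        {g : G | V.character g = 0}.ncard = 2 ^ (n - 1) + 2) ↔
      Nat.card (Subgroup.center G) = 2 ∧ ∃ H : Subgroup G, IsMulCommutative H ∧ H.index = 2 := by
  have hp : IsPGroup 2 G := .of_card hG
  constructor
  · rintro ⟨V, _, hdim, hzeros⟩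
    obtain ⟨htwo, hcard⟩ :=
      (ncard_zeros_eq_two_pow_add_two_iff hG isIrreducible_of_simple hdim).1 hzeros
    exact card_center_eq_two_and_exists_isMulCommutative hp isIrreducible_of_simple htwo hcard
  · rintro ⟨hcard, H, _, hH⟩
    have hcenter : Subgroup.center G ≠ ⊤ := by
      intro htop
      have hle := Nat.pow_le_pow_right two_pos hn
      rw [htop, Subgroup.card_top] at hcard
      omega
    obtain ⟨V, _, _, _, ρ, hρ, hdim, hscalar⟩ :=
      exists_isIrreducible_finrank_eq_two_and_card_scalarSubgroup_eq_two k hp hcenter hcard H hH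
    have hdim' : 1 < Module.finrank k V := by omega
    exact ⟨FDRep.of ρ, simple_of_isIrreducible hρ, hdim',
      (ncard_zeros_eq_two_pow_add_two_iff hG hρ hdim').2 ⟨hdim, hscalar⟩⟩

theorem stmt1_general {k G : Type*} [Field k] [IsAlgClosed k] [NeZero (2 : k)] [Group G]
    [Finite G] {n : ℕ} (hn : 3 ≤ n) (hG : Nat.card G = 2 ^ n) :
    (∀ V : FDRep k G, Simple V → 1 < Module.finrank k V →
        2 ^ (n - 1) + 2 ≤ {g : G | V.character g = 0}.ncard) ∧
    ((∃ V : FDRep k G, Simple V ∧ 1 < Module.finrank k V ∧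
        {g : G | V.character g = 0}.ncard = 2 ^ (n - 1) + 2) ↔
      (Nonempty (G ≃* DihedralGroup (2 ^ (n - 1))) ∨
       Nonempty (G ≃* QuaternionGroup (2 ^ (n - 2))) ∨
       (4 ≤ n ∧ Nonempty (G ≃* SemidihedralGroup n)))) :=
  ⟨fun _ _ hdim ↦ two_pow_add_two_le_ncard_zeros hG isIrreducible_of_simple hdim,
    (exists_simple_ncard_zeros_eq_iff (by omega) hG).trans
      (card_center_eq_two_and_exists_isMulCommutative_iff hn hG)⟩

/-- Let `G` be a group of order `2^n`, `n ≥ 3`. Every non-linear irreducible complex character of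
`G` vanishes at at least `2^(n-1) + 2` elements, and some non-linear irreducible complex character
vanishes at exactly `2^(n-1) + 2` elements if and only if `G` is dihedral, generalized quaternion
or (with `n ≥ 4`) semidihedral of order `2^n`. (`DihedralGroup m` has order `2 * m` and
`QuaternionGroup m` has order `4 * m`.) -/
theorem stmt1 {G : Type*} [Group G] [Finite G] {n : ℕ} (hn : 3 ≤ n)
    (hG : Nat.card G = 2 ^ n) :
    (∀ V : FDRep ℂ G, Simple V → 1 < Module.finrank ℂ V →
        2 ^ (n - 1) + 2 ≤ {g : G | V.character g = 0}.ncard) ∧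
    ((∃ V : FDRep ℂ G, Simple V ∧ 1 < Module.finrank ℂ V ∧
        {g : G | V.character g = 0}.ncard = 2 ^ (n - 1) + 2) ↔
      (Nonempty (G ≃* DihedralGroup (2 ^ (n - 1))) ∨
       Nonempty (G ≃* QuaternionGroup (2 ^ (n - 2))) ∨
       (4 ≤ n ∧ Nonempty (G ≃* SemidihedralGroup n)))) :=
  stmt1_general hn hG
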